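/- Let (E,‖·‖) be an n-dimensional real normed space with n ≥ 3, and let μ_F be the Haar (Lebesgue) measure on E normalized so that μ_F of the unit ball {x : ‖x‖ < 1} equals ω_n. Then the sharp Caffarelli-Kohn-Nirenberg inequality holds on (E,‖·‖,μ_F): for every x₀ ∈ E and every smooth compactly supported function u : E → ℝ, (∫_E |u(x)|^p/‖x-x₀‖^{ap} dμ_F(x))^{1/p} ≤ K_a·(∫_E ‖Du(x)‖_*² dμ_F(x))^{1/2}, where ‖Du(x)‖_* denotes the dual (operator) norm of the Fréchet derivative Du(x) ∈ E*. -/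

import Mathlib

/-!
The inequality is reduced to radial functions by rearrangement, and the radial inequality is
Bliss's one-dimensional inequality with its sharp constant.

**Rearrangement.** Replace each superlevel set `{|u| > t}` by the norm ball of the same measure; its
radius is `levelRadius`, and the decreasing rearrangement `f` of `u` is the generalized inverse
`rearr` of this radius function. The weight `‖x - x₀‖ ^ (-a p)` is nonincreasing in the distance from
`x₀`, so rearranging can only increase the left-hand side (`hardy_littlewood`). The Dirichlet integral
can only decrease (`polya_szego`), because norm balls solve the isoperimetric problem when perimeter
is measured by enlarging a set by small norm balls; this is the Brunn–Minkowski inequality for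
`A + ball 0 t` (`bm_ball`), which is derived from a Prékopa–Leindler inequality (`prekopa_pi`).
Applied to the superlevel sets of `|u|`, Brunn–Minkowski yields the coarea-type inequality
`∫ ψ(t) n ω R(t) ^ (n - 1) dt ≤ ∫ ψ(|u|) ‖Du‖_*` (`coarea_meas`). Taking `ψ(t) = -f'(R(t))`, changing
variables `t = f(r)` and applying the Cauchy–Schwarz inequality gives the Pólya–Szegő inequality
without any use of the coarea formula itself.

**Bliss's inequality.** Put `κ = (n - 2) / 2`, `w = r ^ κ f` and `W = max w`. With
`H'(z) = κ z √(1 - (z / W) ^ (p - 2))` the completed square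
`(r w' ∓ H'(w)) ^ 2 ≥ 0` bounds the Dirichlet integrand from below by
`κ ^ 2 W ^ (2 - p) f ^ p r ^ (κ p - 1) + (± 2 H(w) - κ w ^ 2)'`. Using the sign `+` up to the point
where `w` is maximal and `-` after it, the boundary terms add up to `4 H(W)`, a multiple of `W ^ 2`
(`bliss_aux`). A weighted AM–GM inequality eliminates `W` (`bliss`). The constant contains
`∫₀¹ x √(1 - x ^ (p - 2)) dx`, a Beta integral (`blissPrim_one`), and `CKNconst_sq` identifies the
result with `K_a`.
-/

open MeasureTheory Filter Topology Metric

/-- Volume of the unit ball in `ℝ^n`. -/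
noncomputable def omegaBall (n : ℕ) : ℝ :=
  Real.pi ^ ((n : ℝ) / 2) / Real.Gamma ((n : ℝ) / 2 + 1)

/-- The sharp Caffarelli-Kohn-Nirenberg constant `K_a` (for `p = 2n/(n-2+2a)`). -/
noncomputable def CKNconst (n : ℕ) (a p : ℝ) : ℝ :=
  (1 / (((n : ℝ) - 2) * ((n : ℝ) - a * p))) ^ ((1 : ℝ) / 2) *
    ((2 - a * p) * Real.Gamma ((2 * (n : ℝ) - 2 * a * p) / (2 - a * p)) /
        ((n : ℝ) * omegaBall n * Real.Gamma (((n : ℝ) - a * p) / (2 - a * p)) ^ 2)) ^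
      ((2 - a * p) / (2 * (n : ℝ) - 2 * a * p))

section CKNProof

open scoped ENNReal Pointwise

/-! ### The Brunn–Minkowski inequality -/

/-- The one-dimensional Brunn–Minkowski inequality. For compact sets, `K + min L` and `max K + L` lie
side by side in `K + L`, meeting in a single point; the general case follows by inner regularity. -/
theorem bm_one_dim {A B : Set ℝ} (hA : MeasurableSet A) (hB : MeasurableSet B)
    (hA0 : A.Nonempty) (hB0 : B.Nonempty) :
    volume A + volume B ≤ volume (A + B) := by
  have key : ∀ K L : Set ℝ, IsCompact K → IsCompact L → K.Nonempty → L.Nonempty →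
      volume K + volume L ≤ volume (K + L) := by
    intro K L hK hL hK0 hL0
    obtain ⟨k, hk, hkmax⟩ := hK.exists_isGreatest hK0
    obtain ⟨l, hl, hlmin⟩ := hL.exists_isLeast hL0
    have hsub : (fun x => x + l) '' K ∪ (fun x => k + x) '' (L \ {l}) ⊆ K + L := by
      rintro x (⟨y, hy, rfl⟩ | ⟨y, hy, rfl⟩)
      · exact Set.add_mem_add hy hl
      · exact Set.add_mem_add hk hy.1
    have hdisj : Disjoint ((fun x => x + l) '' K) ((fun x => k + x) '' (L \ {l})) := by
      rw [Set.disjoint_left]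
      rintro _ ⟨y, hy, rfl⟩ ⟨z, hz, hyz⟩
      have h1 : y ≤ k := hkmax hy
      have h2 : l ≤ z := hlmin hz.1
      have h3 : z ≠ l := hz.2
      apply h3
      simp only at hyz
      linarith
    have hm : MeasurableSet ((fun x => k + x) '' (L \ {l})) := by
      rw [Set.image_add_left]
      exact (hL.measurableSet.diff (measurableSet_singleton l)).preimage (by fun_prop)
    calc volume K + volume L
        = volume ((fun x => x + l) '' K) + volume ((fun x => k + x) '' (L \ {l})) := by
          rw [Set.image_add_right, Set.image_add_left, measure_preimage_add_right,
            measure_preimage_add, measure_sdiff_null (by simp)]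
      _ = volume ((fun x => x + l) '' K ∪ (fun x => k + x) '' (L \ {l})) :=
          (measure_union hdisj hm).symm
      _ ≤ _ := measure_mono hsub
  have apx : ∀ C : Set ℝ, MeasurableSet C → C.Nonempty → ∀ r < volume C,
      ∃ K ⊆ C, IsCompact K ∧ K.Nonempty ∧ r < volume K := by
    intro C hC hC0 r hr
    obtain ⟨K, hKC, hK, hr⟩ := hC.exists_lt_isCompact hr
    refine ⟨K, hKC, hK, ?_, hr⟩
    by_contra h
    rw [Set.not_nonempty_iff_eq_empty] at h
    simp [h] at hr
  have apx' : ∀ C : Set ℝ, MeasurableSet C → C.Nonempty →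
      volume C = ⨆ K : {K : Set ℝ // K ⊆ C ∧ IsCompact K ∧ K.Nonempty}, volume K.1 := by
    intro C hC hC0
    apply le_antisymm
    · refine le_of_forall_lt fun r hr => ?_
      obtain ⟨K, h1, h2, h3, h4⟩ := apx C hC hC0 r hr
      exact lt_of_lt_of_le h4
        (le_iSup (fun K : {K : Set ℝ // K ⊆ C ∧ IsCompact K ∧ K.Nonempty} => volume K.1) ⟨K, h1, h2, h3⟩)
    · exact iSup_le fun K => measure_mono K.2.1
  rw [apx' A hA hA0, apx' B hB hB0]
  obtain ⟨a, ha⟩ := hA0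
  obtain ⟨b, hb⟩ := hB0
  have : Nonempty {K : Set ℝ // K ⊆ A ∧ IsCompact K ∧ K.Nonempty} :=
    ⟨{a}, by simpa using ha, isCompact_singleton, by simp⟩
  have : Nonempty {K : Set ℝ // K ⊆ B ∧ IsCompact K ∧ K.Nonempty} :=
    ⟨{b}, by simpa using hb, isCompact_singleton, by simp⟩
  refine ENNReal.iSup_add_iSup_le fun K L => ?_
  exact (key K.1 L.1 K.2.2.1 L.2.2.1 K.2.2.2 L.2.2.2).trans
    (measure_mono (Set.add_subset_add K.2.1 L.2.1))

/-- Layer-cake formula for `ℝ≥0∞`-valued functions. -/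
theorem lintegral_eq_layers {α : Type*} [MeasurableSpace α] (μ : Measure α) [SFinite μ]
    {f : α → ℝ≥0∞} (hf : Measurable f) :
    ∫⁻ x, f x ∂μ = ∫⁻ t in Set.Ioi (0 : ℝ), μ {x | ENNReal.ofReal t < f x} := by
  have h1 : ∀ y : ℝ≥0∞, y = ∫⁻ t in Set.Ioi (0 : ℝ), {t : ℝ | ENNReal.ofReal t < y}.indicator 1 t := by
    intro y
    have hm : MeasurableSet {t : ℝ | ENNReal.ofReal t < y} :=
      measurableSet_lt (by fun_prop) (by fun_prop)
    rw [lintegral_indicator_one hm, Measure.restrict_apply hm]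
    by_cases hy : y = ∞
    · subst hy
      simp
    · have : {t : ℝ | ENNReal.ofReal t < y} ∩ Set.Ioi 0 = Set.Ioo 0 y.toReal := by
        ext t
        simp only [Set.mem_inter_iff, Set.mem_ofPred_eq, Set.mem_Ioi, Set.mem_Ioo]
        constructor
        · rintro ⟨h1, h2⟩
          refine ⟨h2, ?_⟩
          rwa [ENNReal.ofReal_lt_iff_lt_toReal h2.le hy] at h1
        · rintro ⟨h1, h2⟩
          exact ⟨(ENNReal.ofReal_lt_iff_lt_toReal h1.le hy).2 h2, h1⟩
      rw [this, Real.volume_Ioo, sub_zero, ENNReal.ofReal_toReal hy]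
  calc ∫⁻ x, f x ∂μ
      = ∫⁻ x, (∫⁻ t in Set.Ioi (0 : ℝ),
          {q : α × ℝ | ENNReal.ofReal q.2 < f q.1}.indicator 1 (x, t)) ∂μ := by
        refine lintegral_congr fun x => ?_
        rw [h1 (f x)]
        refine lintegral_congr fun t => ?_
        simp [Set.indicator]
    _ = ∫⁻ t in Set.Ioi (0 : ℝ), (∫⁻ x,
          {q : α × ℝ | ENNReal.ofReal q.2 < f q.1}.indicator 1 (x, t) ∂μ) := by
        refine lintegral_lintegral_swap ?_
        refine (Measurable.indicator (by fun_prop) ?_).aemeasurable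
        exact measurableSet_lt (by fun_prop) (by fun_prop)
    _ = _ := by
        refine lintegral_congr fun t => ?_
        rw [← lintegral_indicator_one (measurableSet_lt (by fun_prop) hf)]
        refine lintegral_congr fun x => ?_
        simp [Set.indicator]

/-- One-dimensional Prékopa–Leindler inequality in sum form, for functions of supremum `1`: their
superlevel sets at heights below `1` are nonempty, so `bm_one_dim` applies level by level. -/
theorem prekopa_normalized {l : ℝ} (hl0 : 0 < l) (hl1 : l < 1) {f g h : ℝ → ℝ≥0∞}
    (hf : Measurable f) (hg : Measurable g) (hh : Measurable h)
    (hfgh : ∀ x y, f x ^ (1 - l) * g y ^ l ≤ h (x + y))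
    (hf1 : ∀ x, f x ≤ 1) (hg1 : ∀ x, g x ≤ 1)
    (hfs : ∀ t < 1, ∃ x, t < f x) (hgs : ∀ t < 1, ∃ x, t < g x) :
    (∫⁻ x, f x) + (∫⁻ x, g x) ≤ ∫⁻ x, h x := by
  rw [lintegral_eq_layers _ hf, lintegral_eq_layers _ hg, lintegral_eq_layers _ hh,
    ← lintegral_add_left]
  swap
  · have : Antitone fun t : ℝ => volume {x | ENNReal.ofReal t < f x} := by
      intro s t hst
      exact measure_mono fun x hx => lt_of_le_of_lt (ENNReal.ofReal_le_ofReal hst) hx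
    exact this.measurable
  refine lintegral_mono fun t => ?_
  simp only
  rcases lt_or_ge t 1 with ht | ht
  · have ht' : ENNReal.ofReal t < 1 := by simpa using ht
    refine (bm_one_dim (measurableSet_lt measurable_const hf) (measurableSet_lt measurable_const hg)
      (hfs _ ht') (hgs _ ht')).trans (measure_mono ?_)
    rintro _ ⟨x, hx, y, hy, rfl⟩
    refine lt_of_lt_of_le ?_ (hfgh x y)
    calc ENNReal.ofReal t = ENNReal.ofReal t ^ (1 - l) * ENNReal.ofReal t ^ l := by
          rw [← ENNReal.rpow_add_of_nonneg _ _ (by linarith) hl0.le]; simp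
      _ < _ := ENNReal.mul_lt_mul (ENNReal.rpow_lt_rpow hx (by linarith)) (ENNReal.rpow_lt_rpow hy hl0)
  · have ht' : 1 ≤ ENNReal.ofReal t := by simpa using ht
    have e1 : {x | ENNReal.ofReal t < f x} = ∅ := by
      ext x; simpa using (hf1 x).trans ht'
    have e2 : {x | ENNReal.ofReal t < g x} = ∅ := by
      ext x; simpa using (hg1 x).trans ht'
    simp [e1, e2]

/-- The constant produced by each coordinate in the sum form of the Prékopa–Leindler inequality. -/
noncomputable def plConst (l : ℝ) : ℝ≥0∞ :=
  ENNReal.ofReal (((1 - l) ^ (1 - l))⁻¹ * (l ^ l)⁻¹)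

theorem plConst_ne_zero {l : ℝ} (hl0 : 0 < l) (hl1 : l < 1) : plConst l ≠ 0 := by
  have : 0 < 1 - l := by linarith
  simp only [plConst, ne_eq, ENNReal.ofReal_eq_zero, not_le]
  positivity

theorem plConst_ne_top (l : ℝ) : plConst l ≠ ∞ := ENNReal.ofReal_ne_top

/-- The weighted AM–GM inequality, applied to `X / (1 - l)` and `Y / l`. -/
theorem plConst_mul_le {l : ℝ} (hl0 : 0 < l) (hl1 : l < 1) (X Y : ℝ≥0∞) :
    plConst l * (X ^ (1 - l) * Y ^ l) ≤ X + Y := by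
  have hl2 : 0 < 1 - l := by linarith
  by_cases hX : X = ∞
  · simp [hX]
  by_cases hY : Y = ∞
  · simp [hY]
  lift X to NNReal using hX
  lift Y to NNReal using hY
  have := Real.geom_mean_le_arith_mean2_weighted hl2.le hl0.le
    (show 0 ≤ (X : ℝ) / (1 - l) by positivity) (show 0 ≤ (Y : ℝ) / l by positivity) (by ring)
  rw [Real.div_rpow (by positivity) hl2.le, Real.div_rpow (by positivity) hl0.le,
    mul_div_cancel₀ _ hl2.ne', mul_div_cancel₀ _ hl0.ne'] at this
  have e1 : (X : ℝ≥0∞) = ENNReal.ofReal X := by simp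
  have e2 : (Y : ℝ≥0∞) = ENNReal.ofReal Y := by simp
  rw [e1, e2, ENNReal.ofReal_rpow_of_nonneg (by positivity) hl2.le,
    ENNReal.ofReal_rpow_of_nonneg (by positivity) hl0.le, plConst,
    ← ENNReal.ofReal_mul (by positivity), ← ENNReal.ofReal_mul (by positivity),
    ← ENNReal.ofReal_add (by positivity) (by positivity)]
  refine ENNReal.ofReal_le_ofReal (le_trans (le_of_eq ?_) this)
  field_simp

/-- Dividing by the suprema reduces bounded functions to `prekopa_normalized`; AM–GM then turns the
sum of the integrals into their weighted geometric mean. -/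
theorem prekopa_bdd {l : ℝ} (hl0 : 0 < l) (hl1 : l < 1) {f g h : ℝ → ℝ≥0∞}
    (hf : Measurable f) (hg : Measurable g) (hh : Measurable h)
    (hfgh : ∀ x y, f x ^ (1 - l) * g y ^ l ≤ h (x + y))
    {k : ℝ≥0∞} (hk : k ≠ ∞) (hfk : ∀ x, f x ≤ k) (hgk : ∀ x, g x ≤ k) :
    plConst l * ((∫⁻ x, f x) ^ (1 - l) * (∫⁻ x, g x) ^ l) ≤ ∫⁻ x, h x := by
  have hl2 : 0 < 1 - l := by linarith
  set a := ⨆ x, f x with ha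
  set b := ⨆ x, g x with hb
  have hak : a ≠ ∞ := ne_top_of_le_ne_top hk (iSup_le hfk)
  have hbk : b ≠ ∞ := ne_top_of_le_ne_top hk (iSup_le hgk)
  by_cases ha0 : a = 0
  · have : ∀ x, f x = 0 := by simpa [ha] using ha0
    simp [this, hl2]
  by_cases hb0 : b = 0
  · have : ∀ x, g x = 0 := by simpa [hb] using hb0
    simp [this, hl0]
  have hd0 : a ^ (1 - l) * b ^ l ≠ 0 := by
    simp [ha0, hb0, hak, hbk]
  have hdt : a ^ (1 - l) * b ^ l ≠ ∞ := by
    refine ENNReal.mul_ne_top ?_ ?_ <;> exact ENNReal.rpow_ne_top_of_nonneg (by linarith) (by assumption)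
  have main := prekopa_normalized hl0 hl1 (hf.div_const a) (hg.div_const b)
    (hh.div_const (a ^ (1 - l) * b ^ l))
    (fun x y => by
      rw [ENNReal.div_rpow_of_nonneg _ _ hl2.le, ENNReal.div_rpow_of_nonneg _ _ hl0.le,
        ENNReal.le_div_iff_mul_le (Or.inl hd0) (Or.inl hdt)]
      refine le_trans (le_of_eq ?_) (hfgh x y)
      have h1 : a ^ (1 - l) ≠ 0 := by simp [ha0, hak]
      have h2 : b ^ l ≠ 0 := by simp [hb0, hbk]
      have h3 : a ^ (1 - l) ≠ ∞ := ENNReal.rpow_ne_top_of_nonneg hl2.le hak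
      have h4 : b ^ l ≠ ∞ := ENNReal.rpow_ne_top_of_nonneg hl0.le hbk
      rw [mul_mul_mul_comm, ENNReal.div_mul_cancel h1 h3, ENNReal.div_mul_cancel h2 h4])
    (fun x => ENNReal.div_le_of_le_mul (by simpa using le_iSup f x))
    (fun x => ENNReal.div_le_of_le_mul (by simpa using le_iSup g x))
    (fun t ht => by
      have : t * a < a := by
        simpa using (ENNReal.mul_lt_mul_iff_left ha0 hak).2 ht
      obtain ⟨x, hx⟩ := lt_iSup_iff.1 (ha ▸ this)
      exact ⟨x, by rwa [ENNReal.lt_div_iff_mul_lt (Or.inl ha0) (Or.inl hak)]⟩)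
    (fun t ht => by
      have : t * b < b := by
        simpa using (ENNReal.mul_lt_mul_iff_left hb0 hbk).2 ht
      obtain ⟨x, hx⟩ := lt_iSup_iff.1 (hb ▸ this)
      exact ⟨x, by rwa [ENNReal.lt_div_iff_mul_lt (Or.inl hb0) (Or.inl hbk)]⟩)
  have h5 := (plConst_mul_le hl0 hl1 _ _).trans main
  simp only [div_eq_mul_inv] at h5
  rw [lintegral_mul_const _ hf, lintegral_mul_const _ hg, lintegral_mul_const _ hh,
    ← div_eq_mul_inv, ← div_eq_mul_inv, ← div_eq_mul_inv,
    ENNReal.div_rpow_of_nonneg _ _ hl2.le, ENNReal.div_rpow_of_nonneg _ _ hl0.le,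
    ENNReal.le_div_iff_mul_le (Or.inl hd0) (Or.inl hdt)] at h5
  refine le_trans (le_of_eq ?_) h5
  have h1 : a ^ (1 - l) ≠ 0 := by simp [ha0, hak]
  have h2 : b ^ l ≠ 0 := by simp [hb0, hbk]
  have h3 : a ^ (1 - l) ≠ ∞ := ENNReal.rpow_ne_top_of_nonneg hl2.le hak
  have h4 : b ^ l ≠ ∞ := ENNReal.rpow_ne_top_of_nonneg hl0.le hbk
  rw [mul_assoc, mul_mul_mul_comm, ENNReal.div_mul_cancel h1 h3, ENNReal.div_mul_cancel h2 h4]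

/-- One-dimensional Prékopa–Leindler inequality, by truncation from the bounded case. The function
`h` is evaluated at `x + y` rather than at `(1 - l) x + l y`, whence the factor `plConst l`. -/
theorem prekopa_one {l : ℝ} (hl0 : 0 < l) (hl1 : l < 1) {f g h : ℝ → ℝ≥0∞}
    (hf : Measurable f) (hg : Measurable g) (hh : Measurable h)
    (hfgh : ∀ x y, f x ^ (1 - l) * g y ^ l ≤ h (x + y)) :
    plConst l * ((∫⁻ x, f x) ^ (1 - l) * (∫⁻ x, g x) ^ l) ≤ ∫⁻ x, h x := by
  have hl2 : 0 < 1 - l := by linarith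
  by_cases hF : ∫⁻ x, f x = 0
  · simp [hF, hl2]
  by_cases hG : ∫⁻ x, g x = 0
  · simp [hG, hl0]
  have lim : ∀ φ : ℝ → ℝ≥0∞, Measurable φ →
      Tendsto (fun k : ℕ => ∫⁻ x, min (φ x) (k : ℝ≥0∞)) atTop (𝓝 (∫⁻ x, φ x)) := by
    intro φ hφ
    refine lintegral_tendsto_of_tendsto_of_monotone (fun k => (hφ.min measurable_const).aemeasurable) ?_ ?_
    · refine Eventually.of_forall fun x i j hij => ?_
      exact min_le_min_left _ (by exact_mod_cast hij)
    · refine Eventually.of_forall fun x => ?_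
      have := (tendsto_const_nhds (x := φ x)).min ENNReal.tendsto_nat_nhds_top
      simpa using this
  have T : Tendsto (fun k : ℕ => plConst l * ((∫⁻ x, min (f x) (k : ℝ≥0∞)) ^ (1 - l) *
      (∫⁻ x, min (g x) (k : ℝ≥0∞)) ^ l)) atTop
      (𝓝 (plConst l * ((∫⁻ x, f x) ^ (1 - l) * (∫⁻ x, g x) ^ l))) := by
    refine ENNReal.Tendsto.const_mul ?_ (Or.inr (plConst_ne_top l))
    refine ENNReal.Tendsto.mul ((ENNReal.continuous_rpow_const.tendsto _).comp (lim f hf)) (Or.inl ?_)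
      ((ENNReal.continuous_rpow_const.tendsto _).comp (lim g hg)) (Or.inl ?_)
    · simp [hF, hl2, hl1.le]
    · simp [hG, hl0, hl0.le]
  refine le_of_tendsto' T fun k => ?_
  refine prekopa_bdd hl0 hl1 (hf.min measurable_const) (hg.min measurable_const) hh (fun x y => ?_)
    (ENNReal.natCast_ne_top k) (fun x => min_le_right _ _) (fun x => min_le_right _ _)
  refine le_trans ?_ (hfgh x y)
  gcongr
  · exact min_le_left _ _
  · exact min_le_left _ _

/-- Prékopa–Leindler inequality on `ℝ ^ n`, by induction on the dimension: the integrals over all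
coordinates but the first, as functions of the first one, satisfy the hypothesis of `prekopa_one`. -/
theorem prekopa_pi {l : ℝ} (hl0 : 0 < l) (hl1 : l < 1) (n : ℕ) :
    ∀ {f g h : (Fin n → ℝ) → ℝ≥0∞}, Measurable f → Measurable g → Measurable h →
    (∀ x y, f x ^ (1 - l) * g y ^ l ≤ h (x + y)) →
    plConst l ^ n * ((∫⁻ x, f x) ^ (1 - l) * (∫⁻ x, g x) ^ l) ≤ ∫⁻ x, h x := by
  induction n with
  | zero =>
    intro f g h hf hg hh H
    have : (volume : Measure (Fin 0 → ℝ)) = Measure.dirac 0 := by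
      rw [volume_pi, Measure.pi_of_empty _ 0]
    simp only [this, lintegral_dirac, pow_zero, one_mul]
    simpa using H 0 0
  | succ n ih =>
    intro f g h hf hg hh H
    have fub : ∀ φ : (Fin (n + 1) → ℝ) → ℝ≥0∞, Measurable φ →
        ∫⁻ x, φ x = ∫⁻ s : ℝ, ∫⁻ y : Fin n → ℝ, φ (Fin.cons s y) := by
      intro φ hφ
      have e := (volume_preserving_piFinSuccAbove (fun _ : Fin (n + 1) => ℝ) 0).symm
      rw [← e.lintegral_comp hφ]
      rw [Measure.volume_eq_prod, lintegral_prod]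
      swap
      · exact (hφ.comp (MeasurableEquiv.measurable _)).aemeasurable
      refine lintegral_congr fun s => lintegral_congr fun y => ?_
      congr 1
      simp [MeasurableEquiv.piFinSuccAbove, Fin.insertNthEquiv]
    have mcons : Measurable fun q : ℝ × (Fin n → ℝ) => (Fin.cons q.1 q.2 : Fin (n + 1) → ℝ) := by
      rw [measurable_pi_iff]
      intro i
      refine Fin.cases ?_ (fun j => ?_) i
      · simpa using measurable_fst
      · simp only [Fin.cons_succ]; fun_prop
    rw [fub f hf, fub g hg, fub h hh]
    have c0 : plConst l ^ n ≠ 0 := pow_ne_zero _ (plConst_ne_zero hl0 hl1)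
    have ct : plConst l ^ n ≠ ∞ := ENNReal.pow_ne_top (plConst_ne_top l)
    have mF : ∀ φ : (Fin (n + 1) → ℝ) → ℝ≥0∞, Measurable φ →
        Measurable fun s : ℝ => ∫⁻ y : Fin n → ℝ, φ (Fin.cons s y) := fun φ hφ =>
      Measurable.lintegral_prod_right' (f := fun q : ℝ × (Fin n → ℝ) => φ (Fin.cons q.1 q.2))
        (hφ.comp mcons)
    have ms : ∀ s : ℝ, Measurable fun y : Fin n → ℝ => (Fin.cons s y : Fin (n + 1) → ℝ) :=
      fun s => mcons.comp (by fun_prop : Measurable fun y : Fin n → ℝ => (s, y))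
    have key := prekopa_one hl0 hl1 (mF f hf) (mF g hg) ((mF h hh).div_const (plConst l ^ n))
      (fun s t => by
        rw [ENNReal.le_div_iff_mul_le (Or.inl c0) (Or.inl ct), mul_comm]
        refine ih (hf.comp (ms s)) (hg.comp (ms t)) (hh.comp (ms (s + t))) fun x y => ?_
        refine (H (Fin.cons s x) (Fin.cons t y)).trans (le_of_eq ?_)
        congr 1
        ext i
        refine Fin.cases ?_ (fun j => ?_) i <;> simp)
    simp only [div_eq_mul_inv] at key
    rw [lintegral_mul_const _ (mF h hh), ← div_eq_mul_inv,
      ENNReal.le_div_iff_mul_le (Or.inl c0) (Or.inl ct)] at key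
    refine le_trans (le_of_eq ?_) key
    ring

/-- Multiplicative Brunn–Minkowski inequality for an additive Haar measure: `prekopa_pi` for
indicator functions, read in linear coordinates. -/
theorem pl_haar {E : Type*} [NormedAddCommGroup E] [NormedSpace ℝ E]
    [MeasurableSpace E] [BorelSpace E] [FiniteDimensional ℝ E]
    {n : ℕ} (hdim : Module.finrank ℝ E = n) (μ : Measure E) [μ.IsAddHaarMeasure]
    {l : ℝ} (hl0 : 0 < l) (hl1 : l < 1) {A B : Set E} (hA : MeasurableSet A)
    (hB : MeasurableSet B) (hAB : MeasurableSet (A + B)) :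
    plConst l ^ n * (μ A ^ (1 - l) * μ B ^ l) ≤ μ (A + B) := by
  have hl2 : 0 < 1 - l := by linarith
  have hfr : Module.finrank ℝ E = Module.finrank ℝ (Fin n → ℝ) := by simp [hdim]
  let e : E ≃L[ℝ] (Fin n → ℝ) := ContinuousLinearEquiv.ofFinrankEq hfr
  have hν : (μ.map e).IsAddHaarMeasure := e.isAddHaarMeasure_map μ
  obtain ⟨c, hc⟩ : ∃ c : NNReal, μ.map e = c • volume :=
    ⟨_, Measure.isAddLeftInvariant_eq_smul _ _⟩
  have hme : Measurable e.symm := e.symm.continuous.measurable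
  have hS : ∀ S : Set E, MeasurableSet S → μ S = c * volume (e.symm ⁻¹' S) := by
    intro S hS
    have h1 : (μ.map e) (e.symm ⁻¹' S) = μ S := by
      rw [Measure.map_apply e.continuous.measurable (hme hS), ← Set.preimage_comp]
      simp
    rw [← h1, hc]; rfl
  have key := prekopa_pi hl0 hl1 n
    (f := (e.symm ⁻¹' A).indicator 1) (g := (e.symm ⁻¹' B).indicator 1)
    (h := (e.symm ⁻¹' (A + B)).indicator 1)
    (measurable_one.indicator (hme hA)) (measurable_one.indicator (hme hB))
    (measurable_one.indicator (hme hAB)) (fun x y => by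
      by_cases hx : e.symm x ∈ A
      · by_cases hy : e.symm y ∈ B
        · have : e.symm x + e.symm y ∈ A + B := Set.add_mem_add hx hy
          simp [Set.indicator, hx, hy, this]
        · simp [Set.indicator, hy, hl0]
      · simp [Set.indicator, hx, hl2])
  rw [lintegral_indicator_one (hme hA), lintegral_indicator_one (hme hB),
    lintegral_indicator_one (hme hAB)] at key
  rw [hS A hA, hS B hB, hS _ hAB, ENNReal.mul_rpow_of_nonneg _ _ hl2.le,
    ENNReal.mul_rpow_of_nonneg _ _ hl0.le, mul_mul_mul_comm,
    ← ENNReal.rpow_add_of_nonneg _ _ hl2.le hl0.le, sub_add_cancel, ENNReal.rpow_one,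
    mul_left_comm]
  gcongr

/-- Brunn–Minkowski inequality for the sum of an open set and a ball, with the measure of the
open set expressed through the radius `R` of the ball having the same measure. -/
theorem bm_ball {E : Type*} [NormedAddCommGroup E] [NormedSpace ℝ E]
    [MeasurableSpace E] [BorelSpace E] [FiniteDimensional ℝ E]
    {n : ℕ} (hdim : Module.finrank ℝ E = n) (μ : Measure E) [μ.IsAddHaarMeasure]
    {A : Set E} (hA : IsOpen A) {R t : ℝ} (hR : 0 < R) (ht : 0 < t)
    (hAR : μ A = ENNReal.ofReal (R ^ n) * μ (ball 0 1)) :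
    ENNReal.ofReal ((R + t) ^ n) * μ (ball 0 1) ≤ μ (A + ball 0 t) := by
  have hl0 : 0 < t / (R + t) := by positivity
  have hl1 : t / (R + t) < 1 := by rw [div_lt_one (by positivity)]; linarith
  have key := pl_haar hdim μ hl0 hl1 hA.measurableSet measurableSet_ball
    (hA.add_right (t := ball (0 : E) t)).measurableSet
  refine le_trans (le_of_eq ?_) key
  have h1l : 1 - t / (R + t) = R / (R + t) := by field_simp; ring
  have hB : μ (ball (0 : E) t) = ENNReal.ofReal (t ^ n) * μ (ball 0 1) := by
    rw [Measure.addHaar_ball_of_pos μ _ ht, hdim]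
  rw [hAR, hB]
  set l := t / (R + t) with hl
  have hl2 : 0 < 1 - l := by linarith
  rw [ENNReal.mul_rpow_of_nonneg _ _ hl2.le,
    ENNReal.mul_rpow_of_nonneg _ _ hl0.le, mul_mul_mul_comm,
    ← ENNReal.rpow_add_of_nonneg _ _ hl2.le hl0.le, sub_add_cancel, ENNReal.rpow_one, ← mul_assoc]
  congr 1
  rw [plConst, ENNReal.ofReal_rpow_of_nonneg (by positivity) hl2.le,
    ENNReal.ofReal_rpow_of_nonneg (by positivity) hl0.le,
    ← ENNReal.ofReal_mul (by positivity), ← ENNReal.ofReal_pow (by positivity),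
    ← ENNReal.ofReal_mul (by positivity)]
  congr 1
  rw [← Real.rpow_natCast_mul hR.le, ← Real.rpow_natCast_mul ht.le, mul_comm (n : ℝ),
    mul_comm (n : ℝ), Real.rpow_mul_natCast hR.le, Real.rpow_mul_natCast ht.le, ← mul_pow, ← mul_pow]
  congr 1
  have e1 : R = (1 - l) * (R + t) := by rw [h1l]; field_simp
  have e2 : t = l * (R + t) := by rw [hl]; field_simp
  have e3 : R ^ (1 - l) = (1 - l) ^ (1 - l) * (R + t) ^ (1 - l) := by
    rw [← Real.mul_rpow hl2.le (by positivity), ← e1]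
  have e4 : t ^ l = l ^ l * (R + t) ^ l := by
    rw [← Real.mul_rpow hl0.le (by positivity), ← e2]
  rw [e3, e4]
  have e5 : (R + t) ^ (1 - l) * (R + t) ^ l = R + t := by
    rw [← Real.rpow_add (by positivity)]; simp
  have p1 : 0 < (1 - l) ^ (1 - l) := by positivity
  have p2 : 0 < l ^ l := by positivity
  calc R + t = (R + t) ^ (1 - l) * (R + t) ^ l := e5.symm
    _ = _ := by field_simp

/-! ### Superlevel sets and a coarea inequality -/

section LevelSets

set_option linter.unusedSectionVars false

variable {E : Type*} [NormedAddCommGroup E] [NormedSpace ℝ E]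
    [MeasurableSpace E] [BorelSpace E] [FiniteDimensional ℝ E]

/-- The radius of the ball having the same measure as the superlevel set `{|u| > t}`
(a junk value if that set has infinite measure, which happens only for `t < 0`). -/
noncomputable def levelRadius (n : ℕ) (μ : Measure E) (u : E → ℝ) (t : ℝ) : ℝ :=
  (μ.real {x | t < |u x|} / μ.real (ball (0 : E) 1)) ^ ((n : ℝ)⁻¹)

theorem levelRadius_nonneg (n : ℕ) (μ : Measure E) (u : E → ℝ) (t : ℝ) :
    0 ≤ levelRadius n μ u t := by
  unfold levelRadius; positivity

theorem isOpen_level {u : E → ℝ} (hu : Continuous u) (t : ℝ) : IsOpen {x | t < |u x|} :=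
  isOpen_lt continuous_const hu.abs

theorem level_subset {u : E → ℝ} {t : ℝ} (ht : 0 ≤ t) : {x | t < |u x|} ⊆ tsupport u := by
  intro x hx
  refine subset_tsupport u ?_
  intro h
  have hx' : t < |u x| := hx
  simp only [h, abs_zero] at hx'
  linarith

theorem measure_level_lt_top (μ : Measure E) [μ.IsAddHaarMeasure] {u : E → ℝ}
    (hsupp : HasCompactSupport u) {t : ℝ} (ht : 0 ≤ t) : μ {x | t < |u x|} < ∞ :=
  (measure_mono (level_subset ht)).trans_lt hsupp.measure_lt_top

theorem real_ball_pos (μ : Measure E) [μ.IsAddHaarMeasure] : 0 < μ.real (ball (0 : E) 1) :=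
  ENNReal.toReal_pos (measure_ball_pos μ _ one_pos).ne' measure_ball_lt_top.ne

theorem levelRadius_pow {n : ℕ} (hn : n ≠ 0) (μ : Measure E) [μ.IsAddHaarMeasure] (u : E → ℝ)
    (t : ℝ) : levelRadius n μ u t ^ n = μ.real {x | t < |u x|} / μ.real (ball (0 : E) 1) := by
  rw [levelRadius, Real.rpow_inv_natCast_pow (by positivity) hn]

theorem measure_level {n : ℕ} (hn : n ≠ 0) (μ : Measure E) [μ.IsAddHaarMeasure] {u : E → ℝ}
    (hsupp : HasCompactSupport u) {t : ℝ} (ht : 0 ≤ t) :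
    μ {x | t < |u x|} = ENNReal.ofReal (levelRadius n μ u t ^ n) * μ (ball 0 1) := by
  have h1 : μ (ball (0 : E) 1) = ENNReal.ofReal (μ.real (ball (0 : E) 1)) :=
    (ENNReal.ofReal_toReal measure_ball_lt_top.ne).symm
  have h2 : μ {x | t < |u x|} = ENNReal.ofReal (μ.real {x | t < |u x|}) :=
    (ENNReal.ofReal_toReal (measure_level_lt_top μ hsupp ht).ne).symm
  rw [h1, h2, ← ENNReal.ofReal_mul (by have := levelRadius_nonneg n μ u t; positivity),
    levelRadius_pow hn, div_mul_cancel₀ _ (real_ball_pos μ).ne']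

theorem levelRadius_anti {n : ℕ} (μ : Measure E) [μ.IsAddHaarMeasure] {u : E → ℝ}
    (hsupp : HasCompactSupport u) {s t : ℝ} (hs : 0 ≤ s) (hst : s ≤ t) :
    levelRadius n μ u t ≤ levelRadius n μ u s := by
  unfold levelRadius
  gcongr
  exact (measure_level_lt_top μ hsupp hs).ne

theorem measurable_levelRadius (n : ℕ) (μ : Measure E) (u : E → ℝ) :
    Measurable (levelRadius n μ u) := by
  have h : Antitone fun t : ℝ => μ {x | t < |u x|} := fun s t hst =>
    measure_mono fun x hx => lt_of_le_of_lt hst hx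
  unfold levelRadius Measure.real
  exact ((h.measurable.ennreal_toReal).div_const _).pow_const _

/-- Taylor's inequality for `|u|`, with a remainder uniform in `x` because `Du` is Lipschitz. -/
theorem exists_taylor {u : E → ℝ} (hu : ContDiff ℝ (⊤ : ℕ∞) u) (hsupp : HasCompactSupport u) :
    ∃ C : ℝ, 0 ≤ C ∧ ∀ x y, |u y| ≤ |u x| + ‖fderiv ℝ u x‖ * ‖y - x‖ + C * ‖y - x‖ ^ 2 := by
  have hd : ContDiff ℝ (⊤ : ℕ∞) (fderiv ℝ u) := hu.fderiv_right (by simp)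
  obtain ⟨C, hC⟩ := ContDiff.lipschitzWith_of_hasCompactSupport (hsupp.fderiv ℝ) hd (by simp)
  refine ⟨C, C.2, fun x y => ?_⟩
  have h := (convex_segment x y).norm_image_sub_le_of_norm_fderiv_le' (𝕜 := ℝ) (f := u)
    (φ := fderiv ℝ u x) (C := C * ‖y - x‖)
    (fun z _ => (hu.differentiable (by simp)) z)
    (fun z hz => by
      refine (hC.norm_sub_le z x).trans ?_
      gcongr
      exact norm_sub_le_of_mem_segment hz)
    (left_mem_segment ℝ x y) (right_mem_segment ℝ x y)
  have h2 := (fderiv ℝ u x).le_opNorm (y - x)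
  rw [Real.norm_eq_abs] at h h2
  have h3 : |u y| ≤ |u x| + |fderiv ℝ u x (y - x)| + |u y - u x - fderiv ℝ u x (y - x)| := by
    calc |u y| = |u x + fderiv ℝ u x (y - x) + (u y - u x - fderiv ℝ u x (y - x))| := by ring_nf
      _ ≤ _ := (abs_add_le _ _).trans (by gcongr; exact abs_add_le _ _)
  calc _ ≤ _ := h3
    _ ≤ |u x| + ‖fderiv ℝ u x‖ * ‖y - x‖ + C * ‖y - x‖ * ‖y - x‖ := by gcongr
    _ = _ := by ring

/-- Brunn–Minkowski inequality for the superlevel sets of `|u|`, after enlarging `|u|` to a first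
order majorant of its supremum over balls of radius `t`. -/
theorem level_growth {n : ℕ} (hn : 2 ≤ n) (hdim : Module.finrank ℝ E = n) (μ : Measure E)
    [μ.IsAddHaarMeasure] {u : E → ℝ} (huc : Continuous u) (hsupp : HasCompactSupport u) {C : ℝ}
    (hC0 : 0 ≤ C)
    (hC : ∀ x y, |u y| ≤ |u x| + ‖fderiv ℝ u x‖ * ‖y - x‖ + C * ‖y - x‖ ^ 2)
    {s t : ℝ} (hs : 0 ≤ s) (ht : 0 < t) (ht1 : t ≤ 1) :
    μ {x | s < |u x|} + ENNReal.ofReal t *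
        ENNReal.ofReal (n * μ.real (ball (0 : E) 1) * levelRadius n μ u s ^ (n - 1)) ≤
      μ.restrict (cthickening 1 (tsupport u))
        {x | s < |u x| + t * ‖fderiv ℝ u x‖ + C * t ^ 2} := by
  set R := levelRadius n μ u s with hR
  set K := cthickening 1 (tsupport u) with hK
  have hKm : MeasurableSet K := isClosed_cthickening.measurableSet
  have hAR := measure_level (n := n) (by omega) μ hsupp hs
  rw [← hR] at hAR
  have hR0 : 0 ≤ R := levelRadius_nonneg n μ u s
  have h1 : μ (ball (0 : E) 1) = ENNReal.ofReal (μ.real (ball (0 : E) 1)) :=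
    (ENNReal.ofReal_toReal measure_ball_lt_top.ne).symm
  have hω := real_ball_pos μ
  rw [Measure.restrict_apply' hKm]
  rcases hR0.eq_or_lt with h0 | h0
  · rw [hAR, ← h0]
    simp [zero_pow (show n ≠ 0 by omega), zero_pow (show n - 1 ≠ 0 by omega)]
  · have hbm := bm_ball hdim μ (isOpen_level huc s) h0 ht hAR
    have hsub : {x | s < |u x|} + ball 0 t ⊆
        {x | s < |u x| + t * ‖fderiv ℝ u x‖ + C * t ^ 2} ∩ K := by
      rintro _ ⟨y, hy, z, hz, rfl⟩
      have hz' : ‖z‖ < t := by simpa using hz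
      constructor
      · have := hC (y + z) y
        have e : ‖y - (y + z)‖ = ‖z‖ := by rw [sub_add_cancel_left, norm_neg]
        rw [e] at this
        refine lt_of_lt_of_le hy (this.trans ?_)
        rw [mul_comm t]
        gcongr
      · refine mem_cthickening_of_dist_le (y + z) y _ _ (level_subset hs hy) ?_
        rw [dist_eq_norm]; simpa using hz'.le.trans ht1
    refine le_trans ?_ (hbm.trans (measure_mono hsub))
    rw [hAR, h1, ← ENNReal.ofReal_mul (by positivity), ← ENNReal.ofReal_mul (by positivity),
      ← ENNReal.ofReal_mul (by positivity), ← ENNReal.ofReal_add (by positivity) (by positivity)]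
    refine ENNReal.ofReal_le_ofReal ?_
    have hber : R ^ n + n * t * R ^ (n - 1) ≤ (R + t) ^ n := by
      obtain ⟨m, rfl⟩ : ∃ m, n = m + 1 := ⟨n - 1, by omega⟩
      have hb := one_add_mul_le_pow (show (-2 : ℝ) ≤ t / R by
        have : 0 ≤ t / R := by positivity
        linarith) (m + 1)
      have : (R + t) ^ (m + 1) = R ^ (m + 1) * (1 + t / R) ^ (m + 1) := by
        rw [← mul_pow]; congr 1; field_simp
      rw [this]
      calc _ = R ^ (m + 1) * (1 + ((m + 1 : ℕ) : ℝ) * (t / R)) := by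
            simp only [Nat.add_sub_cancel]; field_simp; ring
        _ ≤ _ := by gcongr
    calc _ = (R ^ n + n * t * R ^ (n - 1)) * μ.real (ball (0 : E) 1) := by ring
      _ ≤ _ := by gcongr

/-- A coarea-type inequality in integrated form: testing with a continuous function `ψ` of the
level, the weighted total variation of `|u|` dominates that of its rearrangement. -/
theorem coarea_cont {n : ℕ} (hn : 2 ≤ n) (hdim : Module.finrank ℝ E = n) (μ : Measure E)
    [μ.IsAddHaarMeasure] {u : E → ℝ} (hu : ContDiff ℝ (⊤ : ℕ∞) u) (hsupp : HasCompactSupport u)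
    {ψ : ℝ → ℝ} (hψ : Continuous ψ) (hψ0 : ∀ s, 0 ≤ ψ s) {M : ℝ} (hψM : ∀ s, ψ s ≤ M) :
    ∫⁻ s in Set.Ioi (0 : ℝ), ENNReal.ofReal (ψ s) *
        ENNReal.ofReal (n * μ.real (ball (0 : E) 1) * levelRadius n μ u s ^ (n - 1)) ≤
      ∫⁻ x, ENNReal.ofReal (ψ |u x|) * ENNReal.ofReal ‖fderiv ℝ u x‖ ∂μ := by
  obtain ⟨C, hC0, hC⟩ := exists_taylor hu hsupp
  have huc : Continuous u := hu.continuous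
  have hdc : Continuous (fun x => ‖fderiv ℝ u x‖) := (hu.continuous_fderiv (by simp)).norm
  obtain ⟨G, hG⟩ := (hsupp.fderiv ℝ).exists_bound_of_continuous (hu.continuous_fderiv (by simp))
  set g : E → ℝ := fun x => ‖fderiv ℝ u x‖ with hg
  have hg0 : ∀ x, 0 ≤ g x := fun x => norm_nonneg _
  set K := cthickening 1 (tsupport u) with hK
  have hKc : IsCompact K := hsupp.isCompact.cthickening
  have hμK : μ K < ∞ := hKc.measure_lt_top
  set w : ℝ → ℝ := fun s => n * μ.real (ball (0 : E) 1) * levelRadius n μ u s ^ (n - 1) with hw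
  have hwm : Measurable w := ((measurable_levelRadius n μ u).pow_const _).const_mul _
  set Q := ∫⁻ s in Set.Ioi (0 : ℝ), ENNReal.ofReal (ψ s) * ENNReal.ofReal (w s) with hQ
  have hii : ∀ a b, IntervalIntegrable ψ volume a b := fun a b => hψ.intervalIntegrable a b
  have hM0 : 0 ≤ M := (hψ0 0).trans (hψM 0)
  -- the difference quotient inequality for a fixed step `t`
  have step : ∀ t : ℝ, 0 < t → t ≤ 1 → Q ≤ ∫⁻ x in K,
      ENNReal.ofReal (t⁻¹ * ∫ s in |u x|..(|u x| + t * g x + C * t ^ 2), ψ s) ∂μ := by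
    intro t ht ht1
    have L1 := lintegral_comp_eq_lintegral_meas_lt_mul (g := ψ)
      (f := fun x => |u x| + t * g x + C * t ^ 2) (μ.restrict K)
      (Eventually.of_forall fun x => by have := hg0 x; simp only [Pi.zero_apply]; positivity)
      (by fun_prop) (fun b _ => hii 0 b) (Eventually.of_forall hψ0)
    have L2 := lintegral_comp_eq_lintegral_meas_lt_mul (g := ψ)
      (f := fun x => |u x|) (μ.restrict K)
      (Eventually.of_forall fun x => by simp only [Pi.zero_apply]; positivity)
      (by fun_prop) (fun b _ => hii 0 b) (Eventually.of_forall hψ0)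
    have hfin : ∫⁻ x in K, ENNReal.ofReal (∫ s in (0 : ℝ)..|u x|, ψ s) ∂μ ≠ ∞ := by
      have hcont : Continuous fun x => ∫ s in (0 : ℝ)..|u x|, ψ s :=
        (intervalIntegral.continuous_primitive hii 0).comp huc.abs
      exact (hcont.continuousOn.integrableOn_compact hKc).lintegral_lt_top.ne
    have hsplit : ∫⁻ x in K, ENNReal.ofReal (∫ s in (0 : ℝ)..(|u x| + t * g x + C * t ^ 2), ψ s) ∂μ
        = ∫⁻ x in K, ENNReal.ofReal (∫ s in (0 : ℝ)..|u x|, ψ s) ∂μ + ∫⁻ x in K,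
          ENNReal.ofReal (∫ s in |u x|..(|u x| + t * g x + C * t ^ 2), ψ s) ∂μ := by
      have hm : Measurable fun x => ENNReal.ofReal (∫ s in (0 : ℝ)..|u x|, ψ s) :=
        ((intervalIntegral.continuous_primitive hii 0).comp huc.abs).measurable.ennreal_ofReal
      rw [← lintegral_add_left hm]
      refine lintegral_congr fun x => ?_
      rw [← ENNReal.ofReal_add, intervalIntegral.integral_add_adjacent_intervals (hii _ _) (hii _ _)]
      · exact intervalIntegral.integral_nonneg (abs_nonneg _) fun s _ => hψ0 s
      · refine intervalIntegral.integral_nonneg ?_ fun s _ => hψ0 s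
        have := hg0 x
        have : 0 ≤ t * g x + C * t ^ 2 := by positivity
        linarith
    have hlow : ∫⁻ x in K, ENNReal.ofReal (∫ s in (0 : ℝ)..|u x|, ψ s) ∂μ + ENNReal.ofReal t * Q ≤
        ∫⁻ x in K, ENNReal.ofReal (∫ s in (0 : ℝ)..(|u x| + t * g x + C * t ^ 2), ψ s) ∂μ := by
      rw [L1, L2, hQ, ← lintegral_const_mul _ (by fun_prop), ← lintegral_add_right _ (by fun_prop)]
      refine setLIntegral_mono' measurableSet_Ioi fun s hs => ?_
      have := level_growth hn hdim μ huc hsupp hC0 hC (le_of_lt hs) ht ht1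
      calc _ ≤ μ {x | s < |u x|} * ENNReal.ofReal (ψ s) +
            ENNReal.ofReal t * (ENNReal.ofReal (ψ s) * ENNReal.ofReal (w s)) := by
              gcongr
              exact Measure.restrict_le_self
        _ = (μ {x | s < |u x|} + ENNReal.ofReal t * ENNReal.ofReal (w s)) *
              ENNReal.ofReal (ψ s) := by ring
        _ ≤ _ := by gcongr
    rw [hsplit] at hlow
    have h2 := (ENNReal.add_le_add_iff_left hfin).1 hlow
    simp_rw [ENNReal.ofReal_mul (inv_nonneg.2 ht.le)]
    rw [lintegral_const_mul' _ _ ENNReal.ofReal_ne_top, ENNReal.ofReal_inv_of_pos ht,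
      mul_comm, ← div_eq_mul_inv, ENNReal.le_div_iff_mul_le (by simp [ht]) (by simp), mul_comm]
    exact h2
  -- the limit `t → 0`
  have T0 : Tendsto (fun k : ℕ => (1 : ℝ) / ((k : ℝ) + 1)) atTop (𝓝 0) :=
    tendsto_one_div_add_atTop_nhds_zero_nat
  have hpos : ∀ k : ℕ, (0 : ℝ) < 1 / ((k : ℝ) + 1) := fun k => by positivity
  have hle1 : ∀ k : ℕ, (1 : ℝ) / ((k : ℝ) + 1) ≤ 1 := fun k => by
    rw [div_le_one (by positivity)]
    have : (0 : ℝ) ≤ k := by positivity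
    linarith
  have hprim : ∀ a, Continuous fun b => ∫ s in a..b, ψ s :=
    fun a => intervalIntegral.continuous_primitive hii a
  have T : Tendsto (fun k : ℕ => ∫⁻ x in K, ENNReal.ofReal ((1 / ((k : ℝ) + 1))⁻¹ *
      ∫ s in |u x|..(|u x| + (1 / ((k : ℝ) + 1)) * g x + C * (1 / ((k : ℝ) + 1)) ^ 2), ψ s) ∂μ)
      atTop (𝓝 (∫⁻ x in K, ENNReal.ofReal (ψ |u x| * g x) ∂μ)) := by
    refine tendsto_lintegral_of_dominated_convergence (fun _ => ENNReal.ofReal (M * (G + C))) ?_ ?_ ?_ ?_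
    · intro k
      have : Continuous fun x => (1 / ((k : ℝ) + 1))⁻¹ *
          ∫ s in |u x|..(|u x| + (1 / ((k : ℝ) + 1)) * g x + C * (1 / ((k : ℝ) + 1)) ^ 2), ψ s := by
        have e : ∀ x, ∫ s in |u x|..(|u x| + (1 / ((k : ℝ) + 1)) * g x + C * (1 / ((k : ℝ) + 1)) ^ 2), ψ s
          = (∫ s in (0 : ℝ)..(|u x| + (1 / ((k : ℝ) + 1)) * g x + C * (1 / ((k : ℝ) + 1)) ^ 2), ψ s) -
            ∫ s in (0 : ℝ)..|u x|, ψ s := fun x =>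
          (intervalIntegral.integral_interval_sub_left (hii _ _) (hii _ _)).symm
        simp_rw [e]
        refine continuous_const.mul (Continuous.sub ?_ ?_)
        · exact (hprim 0).comp (by fun_prop)
        · exact (hprim 0).comp (by fun_prop)
      exact this.measurable.ennreal_ofReal
    · intro k
      refine Eventually.of_forall fun x => ENNReal.ofReal_le_ofReal ?_
      set t := (1 : ℝ) / ((k : ℝ) + 1)
      have ht : 0 < t := hpos k
      have ht1 : t ≤ 1 := hle1 k
      have hgx := hg0 x
      have hb := intervalIntegral.norm_integral_le_of_norm_le_const (a := |u x|)
        (b := |u x| + t * g x + C * t ^ 2) (f := ψ) (C := M)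
        (fun s _ => by rw [Real.norm_eq_abs, abs_of_nonneg (hψ0 s)]; exact hψM s)
      have hd : abs ((|u x| + t * g x + C * t ^ 2) - |u x|) = t * (g x + C * t) := by
        rw [abs_of_nonneg]
        · ring
        · have : 0 ≤ t * g x + C * t ^ 2 := by positivity
          linarith
      rw [hd] at hb
      have hb' := (le_abs_self _).trans hb
      calc _ ≤ t⁻¹ * (M * (t * (g x + C * t))) := by gcongr
        _ = M * (g x + C * t) := by field_simp
        _ ≤ M * (G + C * 1) := by gcongr; exact hG x
        _ = _ := by ring
    · simp only [lintegral_const, Measure.restrict_apply MeasurableSet.univ, Set.univ_inter]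
      exact (ENNReal.mul_lt_top ENNReal.ofReal_lt_top hμK).ne
    · refine Eventually.of_forall fun x => ?_
      refine (ENNReal.continuous_ofReal.tendsto _).comp ?_
      have hD : HasDerivAt (fun t : ℝ => ∫ s in |u x|..(|u x| + t * g x + C * t ^ 2), ψ s)
          (ψ |u x| * g x) 0 := by
        have h1 : HasDerivAt (fun b => ∫ s in |u x|..b, ψ s) (ψ |u x|)
            (|u x| + 0 * g x + C * 0 ^ 2) := by
          have := (hψ.integral_hasStrictDerivAt |u x| |u x|).hasDerivAt
          simpa using this
        have h2 : HasDerivAt (fun t : ℝ => |u x| + t * g x + C * t ^ 2) (g x) 0 := by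
          have := (((hasDerivAt_id (0 : ℝ)).mul_const (g x)).const_add |u x|).add
            (((hasDerivAt_id (0 : ℝ)).pow 2).const_mul C)
          simpa [Pi.add_def] using this
        exact h1.comp (0 : ℝ) h2
      have h3 := hD.tendsto_slope_zero_right
      have h4 : Tendsto (fun k : ℕ => (1 : ℝ) / ((k : ℝ) + 1)) atTop (𝓝[>] 0) :=
        tendsto_nhdsWithin_iff.2 ⟨T0, Eventually.of_forall hpos⟩
      have h5 := h3.comp h4
      simpa [Function.comp_def] using h5
  refine (ge_of_tendsto' T fun k => step _ (hpos k) (hle1 k)).trans ?_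
  refine (setLIntegral_le_lintegral _ _).trans (le_of_eq ?_)
  exact lintegral_congr fun x => ENNReal.ofReal_mul (hψ0 _)

theorem lintegral_ofReal_fderiv_lt_top (μ : Measure E)
    [μ.IsAddHaarMeasure] {u : E → ℝ} (hu : ContDiff ℝ (⊤ : ℕ∞) u) (hsupp : HasCompactSupport u) :
    ∫⁻ x, ENNReal.ofReal ‖fderiv ℝ u x‖ ∂μ < ∞ :=
  ((hu.continuous_fderiv (by simp)).norm.integrable_of_hasCompactSupport
    (hsupp.fderiv ℝ).norm).lintegral_lt_top

/-- The inequality of `coarea_cont` says that one finite measure on `ℝ` is dominated by another when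
tested against continuous functions; approximating closed sets from outside, the domination holds
for the measures themselves, hence for every measurable `ψ`. -/
theorem coarea_meas {n : ℕ} (hn : 2 ≤ n) (hdim : Module.finrank ℝ E = n) (μ : Measure E)
    [μ.IsAddHaarMeasure] {u : E → ℝ} (hu : ContDiff ℝ (⊤ : ℕ∞) u) (hsupp : HasCompactSupport u)
    {ψ : ℝ → ℝ≥0∞} (hψ : Measurable ψ) :
    ∫⁻ s in Set.Ioi (0 : ℝ), ψ s *
        ENNReal.ofReal (n * μ.real (ball (0 : E) 1) * levelRadius n μ u s ^ (n - 1)) ≤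
      ∫⁻ x, ψ |u x| * ENNReal.ofReal ‖fderiv ℝ u x‖ ∂μ := by
  have hgm : Measurable fun x => ENNReal.ofReal ‖fderiv ℝ u x‖ :=
    (hu.continuous_fderiv (by simp)).norm.measurable.ennreal_ofReal
  have hvm : Measurable fun x => |u x| := hu.continuous.abs.measurable
  have hwm : Measurable fun s => ENNReal.ofReal
      (n * μ.real (ball (0 : E) 1) * levelRadius n μ u s ^ (n - 1)) :=
    (((measurable_levelRadius n μ u).pow_const _).const_mul _).ennreal_ofReal
  set w : ℝ → ℝ≥0∞ := fun s => ENNReal.ofReal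
      (n * μ.real (ball (0 : E) 1) * levelRadius n μ u s ^ (n - 1)) with hw
  set ν₁ := (μ.withDensity fun x => ENNReal.ofReal ‖fderiv ℝ u x‖).map (fun x => |u x|) with hν₁
  set ν₂ := (volume.restrict (Set.Ioi (0 : ℝ))).withDensity w with hν₂
  have I1 : ∀ φ : ℝ → ℝ≥0∞, Measurable φ →
      ∫⁻ s, φ s ∂ν₁ = ∫⁻ x, φ |u x| * ENNReal.ofReal ‖fderiv ℝ u x‖ ∂μ := by
    intro φ hφ
    rw [hν₁, lintegral_map hφ hvm]
    refine (lintegral_withDensity_eq_lintegral_mul _ hgm (hφ.comp hvm)).trans ?_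
    refine lintegral_congr fun x => ?_
    simp [mul_comm]
  have I2 : ∀ φ : ℝ → ℝ≥0∞, Measurable φ →
      ∫⁻ s, φ s ∂ν₂ = ∫⁻ s in Set.Ioi (0 : ℝ), φ s * w s := by
    intro φ hφ
    rw [hν₂, lintegral_withDensity_eq_lintegral_mul _ hwm hφ]
    refine lintegral_congr fun x => ?_
    simp [mul_comm]
  have hc : ∀ φ : BoundedContinuousFunction ℝ NNReal, (∀ x, φ x ≤ 1) →
      ∫⁻ s, φ s ∂ν₂ ≤ ∫⁻ s, φ s ∂ν₁ := by
    intro φ hφ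
    rw [I1 _ (by fun_prop), I2 _ (by fun_prop)]
    have := coarea_cont hn hdim μ hu hsupp (ψ := fun s => (φ s : ℝ))
      (NNReal.continuous_coe.comp φ.continuous) (fun s => NNReal.coe_nonneg _) (M := 1)
      (fun s => by exact_mod_cast hφ s)
    simpa using this
  have f1 : IsFiniteMeasure ν₁ := by
    constructor
    have := I1 1 measurable_one
    simp only [Pi.one_apply, lintegral_one, one_mul] at this
    rw [this]
    exact lintegral_ofReal_fderiv_lt_top μ hu hsupp
  have f2 : IsFiniteMeasure ν₂ := by
    constructor
    have := hc 1 (fun x => by simp)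
    simp only [BoundedContinuousFunction.coe_one, Pi.one_apply, ENNReal.coe_one, lintegral_one] at this
    exact this.trans_lt (measure_lt_top _ _)
  have hle : ν₂ ≤ ν₁ := by
    rw [Measure.le_iff]
    intro S hS
    rw [hS.measure_eq_iSup_isClosed_of_ne_top (measure_ne_top ν₂ S)]
    refine iSup₂_le fun F hFS => iSup_le fun hF => ?_
    refine le_trans ?_ (measure_mono hFS)
    exact le_of_tendsto_of_tendsto' (HasOuterApproxClosed.tendsto_lintegral_apprSeq hF ν₂)
      (HasOuterApproxClosed.tendsto_lintegral_apprSeq hF ν₁)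
      fun k => hc _ (HasOuterApproxClosed.apprSeq_apply_le_one hF k)
  rw [← I1 ψ hψ, ← I2 ψ hψ]
  exact lintegral_mono' hle le_rfl

end LevelSets

/-! ### The decreasing rearrangement -/

section Rearrangement

/-- The properties of the function `t ↦ levelRadius n μ u t` on `[0, ∞)` that make its generalized
inverse a Lipschitz decreasing function. -/
structure IsRadiusProfile (R : ℝ → ℝ) (L : NNReal) : Prop where
  nonneg : ∀ t, 0 ≤ R t
  anti : ∀ s t, 0 ≤ s → s ≤ t → R t ≤ R s
  vanish : ∃ T, 0 ≤ T ∧ R T = 0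
  rightCont : ∀ t r, 0 ≤ t → r < R t → ∃ t', t < t' ∧ r < R t'
  pos : 0 < L
  slope : ∀ s t, 0 ≤ s → s < t → 0 < R t → R t + (t - s) / L ≤ R s

/-- The decreasing rearrangement, as the generalized inverse of the radius function `R`,
extended to an even function on `ℝ`. -/
noncomputable def rearr (R : ℝ → ℝ) (r : ℝ) : ℝ := sInf {t | 0 ≤ t ∧ R t ≤ |r|}

variable {R : ℝ → ℝ} {L : NNReal}

theorem rearr_nonneg (R : ℝ → ℝ) (r : ℝ) : 0 ≤ rearr R r := Real.sInf_nonneg fun _ h => h.1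

theorem rearr_even (R : ℝ → ℝ) (r : ℝ) : rearr R (-r) = rearr R r := by
  simp [rearr]

namespace IsRadiusProfile

theorem lt_rearr_iff (h : IsRadiusProfile R L) {t r : ℝ} (ht : 0 ≤ t) :
    t < rearr R r ↔ |r| < R t := by
  constructor
  · intro hlt
    by_contra! hc
    exact absurd (csInf_le ⟨0, fun _ h => h.1⟩ (show t ∈ {t | 0 ≤ t ∧ R t ≤ |r|} from ⟨ht, hc⟩))
      (not_le.2 hlt)
  · intro hlt
    obtain ⟨t', ht', hr'⟩ := h.rightCont t _ ht hlt
    refine lt_of_lt_of_le ht' (le_csInf ?_ ?_)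
    · obtain ⟨T, hT, hT0⟩ := h.vanish
      exact ⟨T, hT, by rw [hT0]; positivity⟩
    · rintro s ⟨hs, hs'⟩
      by_contra! hc
      have := h.anti s t' hs hc.le
      linarith

theorem rearr_le_iff (h : IsRadiusProfile R L) {t r : ℝ} (ht : 0 ≤ t) :
    rearr R r ≤ t ↔ R t ≤ |r| := by
  rw [← not_lt, h.lt_rearr_iff ht, not_lt]

theorem apply_rearr_le (h : IsRadiusProfile R L) (r : ℝ) : R (rearr R r) ≤ |r| :=
  (h.rearr_le_iff (rearr_nonneg R r)).1 le_rfl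

theorem rearr_anti (h : IsRadiusProfile R L) {r s : ℝ} (hrs : |r| ≤ |s|) :
    rearr R s ≤ rearr R r :=
  (h.rearr_le_iff (rearr_nonneg R r)).2 ((h.apply_rearr_le r).trans hrs)

theorem rearr_sub_le (h : IsRadiusProfile R L) (r s : ℝ) :
    rearr R r ≤ rearr R s + L * |r - s| := by
  rcases le_or_gt |s| |r| with hc | hc
  · have := h.rearr_anti hc
    have : 0 ≤ L * |r - s| := by positivity
    linarith
  · have hL : (0 : ℝ) < L := by exact_mod_cast h.pos
    have hd : |s| - |r| ≤ |r - s| := by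
      rw [abs_sub_comm]; exact abs_sub_abs_le_abs_sub s r
    have key : rearr R r ≤ rearr R s + L * (|s| - |r|) := by
      by_contra! hlt
      have hp : 0 < L * (|s| - |r|) := mul_pos hL (by linarith)
      have h0 := rearr_nonneg R s
      rw [h.lt_rearr_iff (by linarith)] at hlt
      have h1 := h.slope (rearr R s) _ h0 (by linarith) (lt_of_le_of_lt (abs_nonneg r) hlt)
      have h2 := h.apply_rearr_le s
      rw [add_sub_cancel_left, mul_div_cancel_left₀ _ hL.ne'] at h1
      linarith
    have : L * (|s| - |r|) ≤ L * |r - s| := by gcongr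
    linarith

theorem lipschitz (h : IsRadiusProfile R L) : LipschitzWith L (rearr R) :=
  LipschitzWith.of_le_add_mul L fun r s => by
    rw [Real.dist_eq]; exact h.rearr_sub_le r s

theorem rearr_eq_zero (h : IsRadiusProfile R L) {r : ℝ} (hr : R 0 ≤ |r|) : rearr R r = 0 :=
  le_antisymm ((h.rearr_le_iff le_rfl).2 hr) (rearr_nonneg R r)

theorem deriv_eq_zero_of_const {f : ℝ → ℝ} {a b : ℝ} (hab : a < b)
    (hc : ∀ x ∈ Set.Icc a b, f x = f a) : deriv f a = 0 ∧ deriv f b = 0 := by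
  have key : ∀ x ∈ Set.Icc a b, deriv f x = 0 := by
    intro x hx
    by_cases hd : DifferentiableAt ℝ f x
    · have h1 := hd.hasDerivAt.hasDerivWithinAt (s := Set.Icc a b)
      have h2 : HasDerivWithinAt f 0 (Set.Icc a b) x :=
        (hasDerivWithinAt_const x (Set.Icc a b) (f a)).congr (fun y hy => hc y hy) (hc x hx)
      exact (uniqueDiffOn_Icc hab x hx).eq_deriv _ h1 h2
    · exact deriv_zero_of_not_differentiableAt hd
  exact ⟨key a (Set.left_mem_Icc.2 hab.le), key b (Set.right_mem_Icc.2 hab.le)⟩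

/-- Flat pieces: if `R (f r) < r`, then `f` is constant on `[R (f r), r]`. -/
theorem flat (h : IsRadiusProfile R L) {r : ℝ} (hr : 0 ≤ r) (hlt : R (rearr R r) < r) :
    deriv (rearr R) (R (rearr R r)) = 0 ∧ deriv (rearr R) r = 0 := by
  refine deriv_eq_zero_of_const hlt fun x hx => ?_
  have h0 := h.nonneg (rearr R r)
  have hx0 : 0 ≤ x := h0.trans hx.1
  have e1 : rearr R (R (rearr R r)) ≤ rearr R r :=
    (h.rearr_le_iff (rearr_nonneg R r)).2 (le_abs_self _)
  have e2 : rearr R r ≤ rearr R x := h.rearr_anti (by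
    rw [abs_of_nonneg hr, abs_of_nonneg hx0]; exact hx.2)
  have e3 : rearr R x ≤ rearr R (R (rearr R r)) := h.rearr_anti (by
    rw [abs_of_nonneg h0, abs_of_nonneg hx0]; exact hx.1)
  linarith

/-- `R (f r)` is the left end of the flat piece of `f` through `r`, and the derivative of `f` vanishes
at both points unless they coincide. -/
theorem deriv_apply_rearr (h : IsRadiusProfile R L) {r : ℝ} (hr : 0 ≤ r) :
    deriv (rearr R) (R (rearr R r)) = deriv (rearr R) r := by
  have := h.apply_rearr_le r
  rw [abs_of_nonneg hr] at this
  rcases this.eq_or_lt with he | hlt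
  · rw [he]
  · rw [(h.flat hr hlt).1, (h.flat hr hlt).2]

/-- `R` inverts `f` wherever the derivative of `f` does not vanish. -/
theorem apply_rearr_eq (h : IsRadiusProfile R L) {r : ℝ} (hr : 0 ≤ r)
    (hd : deriv (rearr R) r ≠ 0) : R (rearr R r) = r := by
  have := h.apply_rearr_le r
  rw [abs_of_nonneg hr] at this
  rcases this.eq_or_lt with he | hlt
  · exact he
  · exact absurd (h.flat hr hlt).2 hd

theorem deriv_eq_zero_of_rearr_eq_zero {r : ℝ} (hr : rearr R r = 0) : deriv (rearr R) r = 0 := by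
  refine IsLocalMin.deriv_eq_zero (Eventually.of_forall fun x => ?_)
  rw [hr]; exact rearr_nonneg R x

theorem deriv_nonpos (h : IsRadiusProfile R L) {r : ℝ} (hr : 0 < r) : deriv (rearr R) r ≤ 0 := by
  have hanti : AntitoneOn (rearr R) (Set.Ioi 0) := fun x hx y hy hxy => h.rearr_anti (by
    rw [abs_of_pos hx, abs_of_pos hy]; exact hxy)
  rw [← derivWithin_of_mem_nhds (Ioi_mem_nhds hr)]
  exact hanti.derivWithin_nonpos

theorem abs_deriv_le (h : IsRadiusProfile R L) (r : ℝ) : |deriv (rearr R) r| ≤ L :=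
  norm_deriv_le_of_lipschitz h.lipschitz

/-- The one-dimensional change of variables `t = f r` in the radial Dirichlet integral. -/
theorem change_var (h : IsRadiusProfile R L) (w : ℝ → ℝ≥0∞) :
    ∫⁻ r in Set.Ioi (0 : ℝ), ENNReal.ofReal (deriv (rearr R) r ^ 2) * w r ≤
      ∫⁻ t in Set.Ioi (0 : ℝ), ENNReal.ofReal (- deriv (rearr R) (R t)) * w (R t) := by
  set f := rearr R with hf
  set D : Set ℝ := Set.Ioi 0 ∩ {r | deriv f r ≠ 0} with hD
  have hDm : MeasurableSet D :=
    measurableSet_Ioi.inter ((measurable_deriv f) (measurableSet_singleton 0)).compl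
  have hRf : ∀ r ∈ D, R (f r) = r := fun r hr => h.apply_rearr_eq (le_of_lt hr.1) hr.2
  have hinj : Set.InjOn f D := fun r hr s hs hrs => by
    rw [← hRf r hr, ← hRf s hs, hrs]
  have himg : f '' D ⊆ Set.Ioi 0 := by
    rintro _ ⟨r, hr, rfl⟩
    refine lt_of_le_of_ne (rearr_nonneg R r) fun h0 => hr.2 ?_
    exact deriv_eq_zero_of_rearr_eq_zero h0.symm
  have hder : ∀ r ∈ D, HasDerivWithinAt f (deriv f r) D r := fun r hr =>
    (differentiableAt_of_deriv_ne_zero hr.2).hasDerivAt.hasDerivWithinAt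
  calc ∫⁻ r in Set.Ioi (0 : ℝ), ENNReal.ofReal (deriv f r ^ 2) * w r
      ≤ ∫⁻ r in D, ENNReal.ofReal (deriv f r ^ 2) * w r := by
        rw [← lintegral_indicator measurableSet_Ioi, ← lintegral_indicator hDm]
        refine lintegral_mono fun r => ?_
        by_cases h1 : r ∈ Set.Ioi (0 : ℝ)
        · by_cases h2 : deriv f r = 0
          · simp [Set.indicator, h2]
          · have : r ∈ D := ⟨h1, h2⟩
            rw [Set.indicator_of_mem h1, Set.indicator_of_mem this]
        · simp [Set.indicator_of_notMem h1]
    _ = ∫⁻ r in D, ENNReal.ofReal |deriv f r| *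
          (ENNReal.ofReal (- deriv f (R (f r))) * w (R (f r))) := by
        refine setLIntegral_congr_fun hDm fun r hr => ?_
        have hn := h.deriv_nonpos hr.1
        rw [hRf r hr, abs_of_nonpos hn, ← mul_assoc, ← ENNReal.ofReal_mul (by linarith)]
        congr 2; ring
    _ = ∫⁻ t in f '' D, ENNReal.ofReal (- deriv f (R t)) * w (R t) :=
        (lintegral_image_eq_lintegral_abs_deriv_mul hDm hder hinj
          (fun t => ENNReal.ofReal (- deriv f (R t)) * w (R t))).symm
    _ ≤ _ := lintegral_mono_set himg

end IsRadiusProfile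

end Rearrangement

/-! ### The Pólya–Szegő inequality -/

section PolyaSzego

set_option linter.unusedSectionVars false

/-- The measure `n c r ^ (n - 1) dr` on `(0, ∞)`, the image under the norm of an additive Haar
measure giving mass `c` to the unit ball. -/
noncomputable def radialMeasure (n : ℕ) (c : ℝ) : Measure ℝ :=
  (volume.restrict (Set.Ioi 0)).withDensity fun r => ENNReal.ofReal (n * c * r ^ (n - 1))

theorem lintegral_radial (n : ℕ) (c : ℝ) {φ : ℝ → ℝ≥0∞} (hφ : Measurable φ) :
    ∫⁻ r, φ r ∂radialMeasure n c =
      ∫⁻ r in Set.Ioi (0 : ℝ), φ r * ENNReal.ofReal (n * c * r ^ (n - 1)) := by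
  rw [radialMeasure, lintegral_withDensity_eq_lintegral_mul _ (by fun_prop) hφ]
  exact lintegral_congr fun r => mul_comm _ _

theorem radialMeasure_Ioo {n : ℕ} (hn : n ≠ 0) {c ρ : ℝ} (hc : 0 ≤ c) (hρ : 0 ≤ ρ) :
    radialMeasure n c (Set.Ioo 0 ρ) = ENNReal.ofReal (c * ρ ^ n) := by
  have h1 : Set.Ioo 0 ρ ∩ Set.Ioi 0 = Set.Ioo 0 ρ :=
    Set.inter_eq_left.2 fun x hx => hx.1
  rw [radialMeasure, withDensity_apply _ measurableSet_Ioo,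
    Measure.restrict_restrict measurableSet_Ioo, h1, setLIntegral_congr Ioo_ae_eq_Ioc,
    ← ofReal_integral_eq_lintegral_ofReal, ← intervalIntegral.integral_of_le hρ]
  · rw [intervalIntegral.integral_const_mul, integral_pow]
    obtain ⟨m, rfl⟩ := Nat.exists_eq_succ_of_ne_zero hn
    congr 1
    simp only [Nat.succ_eq_add_one, Nat.add_sub_cancel]
    have : (m : ℝ) + 1 ≠ 0 := by positivity
    push_cast
    field_simp
    simp
  · exact ((continuous_const.mul (continuous_id.pow _)).integrableOn_Icc).mono_set
      Set.Ioc_subset_Icc_self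
  · refine (ae_restrict_mem measurableSet_Ioc).mono fun r hr => ?_
    have : 0 ≤ r := hr.1.le
    simp only [Pi.zero_apply]
    positivity

theorem radialMeasure_inter (n : ℕ) (c : ℝ) {S : Set ℝ} (hS : MeasurableSet S) :
    radialMeasure n c S = radialMeasure n c (S ∩ Set.Ioi 0) := by
  rw [radialMeasure, withDensity_apply _ hS, withDensity_apply _ (hS.inter measurableSet_Ioi),
    Measure.restrict_restrict hS, Measure.restrict_restrict (hS.inter measurableSet_Ioi),
    Set.inter_assoc, Set.inter_self]

variable {E : Type*} [NormedAddCommGroup E] [NormedSpace ℝ E]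
    [MeasurableSpace E] [BorelSpace E] [FiniteDimensional ℝ E]

/-- The slope condition is Brunn–Minkowski: if `u` is `L`-Lipschitz, the ball of radius `(t - s) / L`
can be added to `{|u| > t}` without leaving `{|u| > s}`. -/
theorem levelRadius_profile {n : ℕ} (hn : n ≠ 0) (hdim : Module.finrank ℝ E = n) (μ : Measure E)
    [μ.IsAddHaarMeasure] {u : E → ℝ} (hu : ContDiff ℝ (⊤ : ℕ∞) u) (hsupp : HasCompactSupport u) :
    ∃ L : NNReal, IsRadiusProfile (levelRadius n μ u) L := by
  obtain ⟨L₀, hL₀⟩ := ContDiff.lipschitzWith_of_hasCompactSupport hsupp hu (by simp)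
  have huc := hu.continuous
  have hω := real_ball_pos (E := E) μ
  have hball : μ (ball (0 : E) 1) ≠ 0 := (measure_ball_pos μ _ one_pos).ne'
  have hball' : μ (ball (0 : E) 1) ≠ ∞ := measure_ball_lt_top.ne
  have hcmp : ∀ x y : ℝ, 0 ≤ x → 0 ≤ y → ENNReal.ofReal (x ^ n) * μ (ball (0 : E) 1) ≤
      ENNReal.ofReal (y ^ n) * μ (ball (0 : E) 1) → x ≤ y := by
    intro x y hx hy hxy
    have h1 := (ENNReal.mul_le_mul_iff_left hball hball').1 hxy
    have h2 := (ENNReal.ofReal_le_ofReal_iff (by positivity)).1 h1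
    exact (pow_le_pow_iff_left₀ hx hy hn).1 h2
  refine ⟨L₀ + 1, fun t => levelRadius_nonneg n μ u t,
    fun s t hs hst => levelRadius_anti μ hsupp hs hst, ?_, ?_, by positivity, ?_⟩
  · obtain ⟨T, hT⟩ := hsupp.exists_bound_of_continuous huc
    refine ⟨T, (norm_nonneg _).trans (hT 0), ?_⟩
    have : {x | T < |u x|} = ∅ := by
      ext x
      simpa using hT x
    rw [levelRadius, this]
    have : (n : ℝ)⁻¹ ≠ 0 := by positivity
    simp [Real.zero_rpow this]
  · intro t r ht hr
    by_contra! hc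
    rcases lt_or_ge r 0 with h0 | h0
    · have := hc (t + 1) (by linarith)
      have := levelRadius_nonneg n μ u (t + 1)
      linarith
    · have hU : {x | t < |u x|} = ⋃ k : ℕ, {x | t + 1 / ((k : ℝ) + 1) < |u x|} := by
        ext x
        simp only [Set.mem_ofPred_eq, Set.mem_iUnion]
        constructor
        · intro h
          obtain ⟨k, hk⟩ := exists_nat_one_div_lt (sub_pos.2 h)
          exact ⟨k, by linarith⟩
        · rintro ⟨k, hk⟩
          have : (0 : ℝ) < 1 / ((k : ℝ) + 1) := by positivity
          linarith
      have hmono : Monotone fun k : ℕ => {x | t + 1 / ((k : ℝ) + 1) < |u x|} := by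
        intro k l hkl x hx
        have : 1 / ((l : ℝ) + 1) ≤ 1 / ((k : ℝ) + 1) := by gcongr
        have hx' : t + 1 / ((k : ℝ) + 1) < |u x| := hx
        show t + 1 / ((l : ℝ) + 1) < |u x|
        linarith
      have hle : μ {x | t < |u x|} ≤ ENNReal.ofReal (r ^ n) * μ (ball (0 : E) 1) := by
        rw [hU, hmono.measure_iUnion]
        refine iSup_le fun k => ?_
        have hk : (0 : ℝ) < 1 / ((k : ℝ) + 1) := by positivity
        rw [measure_level hn μ hsupp (by linarith)]
        gcongr
        · exact levelRadius_nonneg n μ u _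
        · exact hc _ (by linarith)
      rw [measure_level hn μ hsupp ht] at hle
      have := hcmp _ _ (levelRadius_nonneg n μ u t) h0 hle
      linarith
  · intro s t hs hst hR
    have hLp : (0 : ℝ) < ((L₀ + 1 : NNReal) : ℝ) := by positivity
    have hδ : 0 < (t - s) / ((L₀ + 1 : NNReal) : ℝ) := div_pos (by linarith) hLp
    have hbm := bm_ball hdim μ (isOpen_level huc t) hR hδ (measure_level hn μ hsupp (by linarith))
    have hsub : {x | t < |u x|} + ball (0 : E) ((t - s) / ((L₀ + 1 : NNReal) : ℝ)) ⊆
        {x | s < |u x|} := by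
      rintro _ ⟨y, hy, z, hz, rfl⟩
      have hz' : ‖z‖ < (t - s) / ((L₀ + 1 : NNReal) : ℝ) := by simpa using hz
      rw [lt_div_iff₀ hLp] at hz'
      have h1 := hL₀.norm_sub_le y (y + z)
      rw [sub_add_cancel_left, norm_neg, Real.norm_eq_abs] at h1
      have h2 := abs_sub_abs_le_abs_sub (u y) (u (y + z))
      have hy' : t < |u y| := hy
      show s < |u (y + z)|
      push_cast at hz'
      have := norm_nonneg z
      nlinarith
    have := hbm.trans (measure_mono hsub)
    rw [measure_level hn μ hsupp hs] at this
    exact hcmp _ _ (by positivity) (levelRadius_nonneg n μ u s) this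

variable {n : ℕ} {μ : Measure E} [μ.IsAddHaarMeasure] {u : E → ℝ} {L : NNReal}

/-- `|u|` and its rearrangement are equimeasurable. -/
theorem measure_level_rearr (hn : n ≠ 0) (hsupp : HasCompactSupport u)
    (hR : IsRadiusProfile (levelRadius n μ u) L) {t : ℝ} (ht : 0 ≤ t) :
    radialMeasure n (μ.real (ball (0 : E) 1)) {r | t < rearr (levelRadius n μ u) r} =
      μ {x | t < |u x|} := by
  have hm : MeasurableSet {r | t < rearr (levelRadius n μ u) r} :=
    measurableSet_lt measurable_const hR.lipschitz.continuous.measurable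
  have hset : {r | t < rearr (levelRadius n μ u) r} ∩ Set.Ioi 0 =
      Set.Ioo 0 (levelRadius n μ u t) := by
    ext r
    simp only [Set.mem_inter_iff, Set.mem_ofPred_eq, Set.mem_Ioi, Set.mem_Ioo, hR.lt_rearr_iff ht]
    constructor
    · rintro ⟨h1, h2⟩; exact ⟨h2, by rwa [abs_of_pos h2] at h1⟩
    · rintro ⟨h1, h2⟩; exact ⟨by rwa [abs_of_pos h1], h1⟩
  rw [radialMeasure_inter _ _ hm, hset,
    radialMeasure_Ioo hn (real_ball_pos μ).le (hR.nonneg t), measure_level hn μ hsupp ht, mul_comm,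
    ENNReal.ofReal_mul (pow_nonneg (hR.nonneg t) n)]
  congr 1
  exact (ENNReal.ofReal_toReal measure_ball_lt_top.ne)

/-- Equimeasurability for integrals. The restriction to positive values is necessary because the
superlevel sets only determine the distribution of `|u|` away from `0`. -/
theorem lintegral_comp_rearr (hn : n ≠ 0) (huc : Continuous u) (hsupp : HasCompactSupport u)
    (hR : IsRadiusProfile (levelRadius n μ u) L) {φ : ℝ → ℝ≥0∞} (hφ : Measurable φ) :
    ∫⁻ x, (Set.Ioi 0).indicator φ |u x| ∂μ =
      ∫⁻ r, (Set.Ioi 0).indicator φ (rearr (levelRadius n μ u) r)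
        ∂radialMeasure n (μ.real (ball (0 : E) 1)) := by
  set f := rearr (levelRadius n μ u) with hf
  set m := radialMeasure n (μ.real (ball (0 : E) 1)) with hm
  have hfm : Measurable f := hR.lipschitz.continuous.measurable
  have hvm : Measurable fun x => |u x| := huc.abs.measurable
  set m₁ := (μ.map (fun x => |u x|)).restrict (Set.Ioi 0) with hm₁
  set m₂ := (m.map f).restrict (Set.Ioi 0) with hm₂
  have hIoi : ∀ t : ℝ, m₁ (Set.Ioi t) = m₂ (Set.Ioi t) ∧ m₁ (Set.Ioi t) < ∞ := by
    intro t
    have e1 : m₁ (Set.Ioi t) = μ {x | max t 0 < |u x|} := by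
      rw [hm₁, Measure.restrict_apply measurableSet_Ioi, Set.Ioi_inter_Ioi,
        Measure.map_apply hvm measurableSet_Ioi]
      rfl
    have e2 : m₂ (Set.Ioi t) = m {r | max t 0 < f r} := by
      rw [hm₂, Measure.restrict_apply measurableSet_Ioi, Set.Ioi_inter_Ioi,
        Measure.map_apply hfm measurableSet_Ioi]
      rfl
    rw [e1, e2]
    exact ⟨(measure_level_rearr hn hsupp hR (le_max_right t 0)).symm,
      measure_level_lt_top μ hsupp (le_max_right t 0)⟩
  have huniv : ∀ m' : Measure ℝ, (m'.restrict (Set.Ioi 0)) Set.univ =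
      (m'.restrict (Set.Ioi 0)) (Set.Ioi 0) := by
    intro m'; simp
  have f1 : IsFiniteMeasure m₁ := ⟨by rw [hm₁, huniv]; exact (hIoi 0).2⟩
  have f2 : IsFiniteMeasure m₂ := ⟨by rw [hm₂, huniv]; exact (hIoi 0).1 ▸ (hIoi 0).2⟩
  have heq : m₁ = m₂ := by
    refine Measure.ext_of_Iic m₁ m₂ fun t => ?_
    rw [← Set.compl_Ioi, measure_compl measurableSet_Ioi (measure_ne_top _ _),
      measure_compl measurableSet_Ioi (measure_ne_top _ _), (hIoi t).1, hm₁, hm₂, huniv, huniv,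
      ← hm₁, ← hm₂, (hIoi 0).1]
  have hind : Measurable ((Set.Ioi (0 : ℝ)).indicator φ) := hφ.indicator measurableSet_Ioi
  rw [← lintegral_map (f := (Set.Ioi (0 : ℝ)).indicator φ) hind hvm,
    ← lintegral_map (f := (Set.Ioi (0 : ℝ)).indicator φ) hind hfm,
    lintegral_indicator measurableSet_Ioi, lintegral_indicator measurableSet_Ioi]
  rw [← hm₁, ← hm₂, heq]

/-- Pólya–Szegő inequality: the radial Dirichlet integral of the rearrangement is at most that
of `u`. -/
theorem polya_szego (hn : 2 ≤ n) (hdim : Module.finrank ℝ E = n)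
    (hu : ContDiff ℝ (⊤ : ℕ∞) u) (hsupp : HasCompactSupport u)
    (hR : IsRadiusProfile (levelRadius n μ u) L) :
    ∫⁻ r, ENNReal.ofReal (deriv (rearr (levelRadius n μ u)) r ^ 2)
        ∂radialMeasure n (μ.real (ball (0 : E) 1)) ≤
      ∫⁻ x, ENNReal.ofReal (‖fderiv ℝ u x‖ ^ 2) ∂μ := by
  have hn0 : n ≠ 0 := by omega
  set R := levelRadius n μ u with hRdef
  set f := rearr R with hf
  set ω := μ.real (ball (0 : E) 1) with hω
  have hdm : Measurable (deriv f) := measurable_deriv f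
  have hRm : Measurable R := measurable_levelRadius n μ u
  set η : ℝ → ℝ≥0∞ := fun t => ENNReal.ofReal (- deriv f (R t)) with hη
  have hηm : Measurable η := (hdm.comp hRm).neg.ennreal_ofReal
  set ψ : ℝ → ℝ≥0∞ := (Set.Ioi 0).indicator η with hψ
  have hψm : Measurable ψ := hηm.indicator measurableSet_Ioi
  set D := ∫⁻ r, ENNReal.ofReal (deriv f r ^ 2) ∂radialMeasure n ω with hD
  set G := ∫⁻ x, ENNReal.ofReal (‖fderiv ℝ u x‖ ^ 2) ∂μ with hG
  have hgc : Continuous fun x => ‖fderiv ℝ u x‖ := (hu.continuous_fderiv (by simp)).norm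
  -- By the change of variables `t = f r`, `D` is the left-hand side of the coarea inequality.
  have hDle : D ≤ ∫⁻ x, ψ |u x| * ENNReal.ofReal ‖fderiv ℝ u x‖ ∂μ := by
    rw [hD, lintegral_radial _ _ (by fun_prop)]
    refine (hR.change_var _).trans (le_trans (le_of_eq ?_) (coarea_meas hn hdim μ hu hsupp hψm))
    refine setLIntegral_congr_fun measurableSet_Ioi fun t ht => ?_
    rw [hψ, Set.indicator_of_mem ht]
  -- By equimeasurability and `f' (R (f r)) = f' r`, the square of `ψ |u|` integrates to at most `D`.
  have hψD : ∫⁻ x, (ψ |u x|) ^ (2 : ℝ) ∂μ ≤ D := by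
    have e : ∀ t, (ψ t) ^ (2 : ℝ) = (Set.Ioi 0).indicator (fun t => η t ^ (2 : ℝ)) t := by
      intro t
      by_cases ht : t ∈ Set.Ioi (0 : ℝ)
      · simp only [hψ, Set.indicator_of_mem ht]
      · simp only [hψ, Set.indicator_of_notMem ht]
        simp
    simp_rw [e]
    have hcm : Measurable fun r => (Set.Ioi 0).indicator (fun t => η t ^ (2 : ℝ)) (f r) :=
      ((hηm.pow_const _).indicator measurableSet_Ioi).comp hR.lipschitz.continuous.measurable
    rw [lintegral_comp_rearr hn0 hu.continuous hsupp hR (hηm.pow_const _), hD,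
      lintegral_radial _ _ hcm,
      lintegral_radial _ _ (by fun_prop)]
    · refine setLIntegral_mono' measurableSet_Ioi fun r hr => ?_
      gcongr
      by_cases ht : f r ∈ Set.Ioi (0 : ℝ)
      · rw [Set.indicator_of_mem ht, hη]
        have h1 := hR.deriv_apply_rearr (le_of_lt hr)
        have h2 := hR.deriv_nonpos hr
        show ENNReal.ofReal (- deriv f (R (f r))) ^ (2 : ℝ) ≤ _
        rw [h1, ENNReal.ofReal_rpow_of_nonneg (by linarith) (by norm_num)]
        refine ENNReal.ofReal_le_ofReal (le_of_eq ?_)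
        norm_cast
        ring
      · rw [Set.indicator_of_notMem ht]
        simp
  have hG2 : ∫⁻ x, (ENNReal.ofReal ‖fderiv ℝ u x‖) ^ (2 : ℝ) ∂μ = G := by
    refine lintegral_congr fun x => ?_
    rw [ENNReal.ofReal_rpow_of_nonneg (norm_nonneg _) (by norm_num)]
    norm_cast
  have hDfin : D < ∞ := by
    have hae : ∀ r ∈ Set.Ioi (0 : ℝ), ENNReal.ofReal (deriv f r ^ 2) ≤
        (Set.Ioo 0 (R 0 + 1)).indicator (fun _ => ENNReal.ofReal ((L : ℝ) ^ 2)) r := by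
      intro r hr
      by_cases h1 : r < R 0 + 1
      · rw [Set.indicator_of_mem (show r ∈ Set.Ioo 0 (R 0 + 1) from ⟨hr, h1⟩)]
        refine ENNReal.ofReal_le_ofReal ?_
        rw [← sq_abs]
        have := hR.abs_deriv_le r
        gcongr
      · have : f r = 0 := hR.rearr_eq_zero (by
          rw [abs_of_pos hr]; linarith)
        rw [IsRadiusProfile.deriv_eq_zero_of_rearr_eq_zero this]
        simp
    have : D ≤ ∫⁻ r, (Set.Ioo 0 (R 0 + 1)).indicator (fun _ => ENNReal.ofReal ((L : ℝ) ^ 2)) r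
        ∂radialMeasure n ω := by
      rw [hD, lintegral_radial _ _ (by fun_prop),
        lintegral_radial _ _ (measurable_const.indicator measurableSet_Ioo)]
      refine setLIntegral_mono' measurableSet_Ioi fun r hr => ?_
      gcongr
      exact hae r hr
    refine this.trans_lt ?_
    rw [lintegral_indicator_const measurableSet_Ioo,
      radialMeasure_Ioo hn0 (real_ball_pos μ).le (by have := hR.nonneg 0; linarith)]
    exact ENNReal.mul_lt_top ENNReal.ofReal_lt_top ENNReal.ofReal_lt_top
  have hCS := ENNReal.lintegral_mul_le_Lp_mul_Lq μ Real.HolderConjugate.two_two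
    (f := fun x => ψ |u x|) (g := fun x => ENNReal.ofReal ‖fderiv ℝ u x‖)
    (hψm.comp hu.continuous.abs.measurable).aemeasurable hgc.measurable.ennreal_ofReal.aemeasurable
  -- Cauchy–Schwarz gives `D ≤ √D √G`, and `√D` can be cancelled since `D` is finite.
  have hfin : D ≤ D ^ (1 / 2 : ℝ) * G ^ (1 / 2 : ℝ) := by
    refine hDle.trans (hCS.trans ?_)
    rw [hG2]
    gcongr
  rcases eq_or_ne D 0 with h0 | h0
  · rw [h0]; exact zero_le
  · have hs : D = D ^ (1 / 2 : ℝ) * D ^ (1 / 2 : ℝ) := by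
      rw [← ENNReal.rpow_add _ _ h0 hDfin.ne]; norm_num
    have h2 : D ^ (1 / 2 : ℝ) * D ^ (1 / 2 : ℝ) ≤ D ^ (1 / 2 : ℝ) * G ^ (1 / 2 : ℝ) := by
      rw [← hs]; exact hfin
    have h3 := (ENNReal.mul_le_mul_iff_right (a := D ^ (1 / 2 : ℝ)) (by simp [h0, hDfin.ne])
      (ENNReal.rpow_ne_top_of_nonneg (by norm_num) hDfin.ne)).1 h2
    exact (ENNReal.rpow_le_rpow_iff (by norm_num)).1 h3

end PolyaSzego

/-! ### The Hardy–Littlewood inequality -/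

section HardyLittlewood

set_option linter.unusedSectionVars false

variable {E : Type*} [NormedAddCommGroup E] [NormedSpace ℝ E]
    [MeasurableSpace E] [BorelSpace E] [FiniteDimensional ℝ E]
    {n : ℕ} {μ : Measure E} [μ.IsAddHaarMeasure] {u : E → ℝ} {L : NNReal}

theorem lt_inv_rpow_iff {s τ y : ℝ} (hs : 0 < s) (hτ : 0 < τ) (hy : 0 < y) :
    τ < (y ^ s)⁻¹ ↔ y < (τ⁻¹) ^ (s⁻¹) := by
  rw [lt_inv_comm₀ hτ (by positivity), Real.lt_rpow_inv_iff_of_pos hy.le (by positivity) hs]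

/-- Bathtub principle: among sets of given measure, a ball around the pole maximizes the integral
of an inverse power of the distance to the pole. -/
theorem bathtub (hn : n ≠ 0) (hdim : Module.finrank ℝ E = n) (huc : Continuous u)
    (hsupp : HasCompactSupport u) (hR : IsRadiusProfile (levelRadius n μ u) L) {s : ℝ} (hs : 0 ≤ s)
    (x₀ : E) {t : ℝ} (ht : 0 ≤ t) :
    ∫⁻ x in {x | t < |u x|}, ENNReal.ofReal (‖x - x₀‖ ^ s)⁻¹ ∂μ ≤
      ∫⁻ r in {r | t < rearr (levelRadius n μ u) r}, ENNReal.ofReal (|r| ^ s)⁻¹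
        ∂radialMeasure n (μ.real (ball (0 : E) 1)) := by
  set R := levelRadius n μ u with hRdef
  set f := rearr R with hf
  set ω := μ.real (ball (0 : E) 1) with hω
  have hω0 : 0 < ω := real_ball_pos μ
  have hfm : Measurable f := hR.lipschitz.continuous.measurable
  have hA : MeasurableSet {x | t < |u x|} := (isOpen_level huc t).measurableSet
  have hS : MeasurableSet {r | t < f r} := measurableSet_lt measurable_const hfm
  rcases hs.eq_or_lt with h0 | h0
  · simp only [← h0, Real.rpow_zero, inv_one, ENNReal.ofReal_one, lintegral_one,
      Measure.restrict_apply MeasurableSet.univ, Set.univ_inter]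
    exact (measure_level_rearr hn hsupp hR ht).ge
  have hgm : Measurable fun x : E => (‖x - x₀‖ ^ s)⁻¹ := by fun_prop
  have hrm : Measurable fun r : ℝ => (|r| ^ s)⁻¹ := by fun_prop
  rw [lintegral_eq_lintegral_meas_lt _ (Eventually.of_forall fun x => by
      simp only [Pi.zero_apply]; positivity) hgm.aemeasurable,
    lintegral_eq_lintegral_meas_lt _ (Eventually.of_forall fun x => by
      simp only [Pi.zero_apply]; positivity) hrm.aemeasurable]
  refine setLIntegral_mono' measurableSet_Ioi fun τ hτ => ?_
  have hτ0 : 0 < τ := hτ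
  set σ : ℝ := (τ⁻¹) ^ (s⁻¹) with hσ
  have hσ0 : 0 < σ := by positivity
  rw [Measure.restrict_apply' hA, Measure.restrict_apply' hS]
  have h1 : {x : E | τ < (‖x - x₀‖ ^ s)⁻¹} ⊆ ball x₀ σ := by
    intro x hx
    rw [mem_ball, dist_eq_norm]
    rcases (norm_nonneg (x - x₀)).eq_or_lt with h | h
    · rw [← h]; exact hσ0
    · exact (lt_inv_rpow_iff h0 hτ0 h).1 hx
  have h2 : Set.Ioo 0 (min (R t) σ) ⊆ {r : ℝ | τ < (|r| ^ s)⁻¹} ∩ {r | t < f r} := by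
    rintro r ⟨hr0, hr⟩
    have hr1 := lt_of_lt_of_le hr (min_le_left _ _)
    have hr2 := lt_of_lt_of_le hr (min_le_right _ _)
    refine ⟨?_, ?_⟩
    · show τ < (|r| ^ s)⁻¹
      rw [abs_of_pos hr0]; exact (lt_inv_rpow_iff h0 hτ0 hr0).2 hr2
    · exact (hR.lt_rearr_iff ht).2 (by rwa [abs_of_pos hr0])
  refine le_trans ?_ (measure_mono h2)
  have hRt := hR.nonneg t
  rw [radialMeasure_Ioo hn hω0.le (le_min hRt hσ0.le)]
  rcases min_choice (R t) σ with hm | hm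
  · rw [hm]
    refine (measure_mono Set.inter_subset_right).trans (le_of_eq ?_)
    rw [measure_level hn μ hsupp ht, mul_comm, ENNReal.ofReal_mul hω0.le]
    congr 1
    exact (ENNReal.ofReal_toReal measure_ball_lt_top.ne).symm
  · rw [hm]
    refine (measure_mono (Set.inter_subset_left.trans h1)).trans (le_of_eq ?_)
    rw [Measure.addHaar_ball_of_pos μ x₀ hσ0, hdim, mul_comm, ENNReal.ofReal_mul hω0.le]
    congr 1
    exact (ENNReal.ofReal_toReal measure_ball_lt_top.ne).symm

/-- Hardy–Littlewood inequality for the weight `‖x - x₀‖ ^ (-s)`. -/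
theorem hardy_littlewood (hn : n ≠ 0) (hdim : Module.finrank ℝ E = n) (huc : Continuous u)
    (hsupp : HasCompactSupport u) (hR : IsRadiusProfile (levelRadius n μ u) L) {s p : ℝ}
    (hs : 0 ≤ s) (hp : 0 < p) (x₀ : E) :
    ∫⁻ x, ENNReal.ofReal (|u x| ^ p / ‖x - x₀‖ ^ s) ∂μ ≤
      ∫⁻ r, ENNReal.ofReal (rearr (levelRadius n μ u) r ^ p / |r| ^ s)
        ∂radialMeasure n (μ.real (ball (0 : E) 1)) := by
  set f := rearr (levelRadius n μ u) with hf
  set m := radialMeasure n (μ.real (ball (0 : E) 1)) with hm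
  have hfm : Measurable f := hR.lipschitz.continuous.measurable
  have hvm : Measurable fun x => |u x| := huc.abs.measurable
  have hgm : Measurable fun x : E => ENNReal.ofReal (‖x - x₀‖ ^ s)⁻¹ := by fun_prop
  have hrm : Measurable fun r : ℝ => ENNReal.ofReal (|r| ^ s)⁻¹ := by fun_prop
  have e1 : ∫⁻ x, ENNReal.ofReal (|u x| ^ p / ‖x - x₀‖ ^ s) ∂μ =
      ∫⁻ x, ENNReal.ofReal (|u x| ^ p) ∂(μ.withDensity fun x => ENNReal.ofReal (‖x - x₀‖ ^ s)⁻¹) := by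
    rw [lintegral_withDensity_eq_lintegral_mul _ hgm (by fun_prop)]
    refine lintegral_congr fun x => ?_
    rw [Pi.mul_apply, ← ENNReal.ofReal_mul (by positivity), div_eq_mul_inv, mul_comm]
  have e2 : ∫⁻ r, ENNReal.ofReal (f r ^ p / |r| ^ s) ∂m =
      ∫⁻ r, ENNReal.ofReal (f r ^ p) ∂(m.withDensity fun r => ENNReal.ofReal (|r| ^ s)⁻¹) := by
    rw [lintegral_withDensity_eq_lintegral_mul _ hrm (by fun_prop)]
    refine lintegral_congr fun r => ?_
    rw [Pi.mul_apply, ← ENNReal.ofReal_mul (by positivity), div_eq_mul_inv, mul_comm]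
  rw [e1, e2, lintegral_rpow_eq_lintegral_meas_lt_mul _ (Eventually.of_forall fun x => abs_nonneg _)
      hvm.aemeasurable hp,
    lintegral_rpow_eq_lintegral_meas_lt_mul _ (Eventually.of_forall fun x => rearr_nonneg _ _)
      hfm.aemeasurable hp]
  gcongr 1
  refine setLIntegral_mono' measurableSet_Ioi fun t ht => ?_
  gcongr
  rw [withDensity_apply _ (isOpen_level huc t).measurableSet,
    withDensity_apply _ (measurableSet_lt measurable_const hfm)]
  exact bathtub hn hdim huc hsupp hR hs x₀ (le_of_lt ht)

end HardyLittlewood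

/-! ### Bliss's inequality -/

section Bliss

/-- The integrand of the constant in Bliss's inequality; it is extended to negative arguments by
an absolute value and vanishes beyond `1`, since `Real.sqrt` of a negative number is `0`. -/
noncomputable def blissFun (p x : ℝ) : ℝ := x * √(1 - |x| ^ (p - 2))

/-- The primitive of `blissFun p`. -/
noncomputable def blissPrim (p y : ℝ) : ℝ := ∫ x in (0 : ℝ)..y, blissFun p x

theorem continuous_blissFun {p : ℝ} (hp : 2 < p) : Continuous (blissFun p) := by
  unfold blissFun
  have : Continuous fun x : ℝ => |x| ^ (p - 2) :=
    continuous_abs.rpow_const fun x => Or.inr (by linarith)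
  fun_prop

theorem hasDerivAt_blissPrim {p : ℝ} (hp : 2 < p) (y : ℝ) :
    HasDerivAt (blissPrim p) (blissFun p y) y :=
  ((continuous_blissFun hp).integral_hasStrictDerivAt 0 y).hasDerivAt

/-- The potential `± 2 H(z) - κ z ^ 2` used to calibrate the Dirichlet integral, where
`H' = κ z √(1 - (z / W) ^ (p - 2))`; the sign is `σ`. -/
noncomputable def calibPot (p κ W σ z : ℝ) : ℝ :=
  σ * (2 * κ * W ^ 2 * blissPrim p (z / W)) - κ * z ^ 2

theorem hasDerivAt_calibPot {p κ W σ : ℝ} (hp : 2 < p) (z : ℝ) :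
    HasDerivAt (calibPot p κ W σ) (σ * (2 * κ * W * blissFun p (z / W)) - 2 * κ * z) z := by
  have h1 : HasDerivAt (fun z => z / W) (1 / W) z := (hasDerivAt_id z).div_const W
  have h2 := (hasDerivAt_blissPrim hp (z / W)).comp z h1
  have h3 := ((h2.const_mul (2 * κ * W ^ 2)).const_mul σ).sub
    (((hasDerivAt_id z).pow 2).const_mul κ)
  refine h3.congr_deriv ?_
  simp
  field_simp

theorem contDiff_calibPot {p κ W σ : ℝ} (hp : 2 < p) :
    ContDiff ℝ 1 (calibPot p κ W σ) := by
  rw [contDiff_one_iff_deriv]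
  refine ⟨fun z => (hasDerivAt_calibPot hp z).differentiableAt, ?_⟩
  have : deriv (calibPot p κ W σ) =
      fun z => σ * (2 * κ * W * blissFun p (z / W)) - 2 * κ * z :=
    funext fun z => (hasDerivAt_calibPot hp z).deriv
  rw [this]
  have := continuous_blissFun hp
  fun_prop

/-- On an interval away from `0` the composite is Lipschitz, so the fundamental theorem of calculus
applies to it although `f` is only differentiable almost everywhere. -/
theorem ac_comp {f : ℝ → ℝ} {L : NNReal} (hf : LipschitzWith L f) {q : ℝ → ℝ}
    (hq : ContDiff ℝ 1 q) (κ : ℝ) {α β : ℝ} (hα : 0 < α) (hαβ : α ≤ β) :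
    AbsolutelyContinuousOnInterval (fun r => q (r ^ κ * f r)) α β := by
  obtain ⟨M, hM⟩ := isCompact_Icc.exists_bound_of_continuousOn
    (s := Set.Icc α β) hf.continuous.continuousOn
  have hQ : ContDiffOn ℝ 1 (fun z : ℝ × ℝ => q (z.1 ^ κ * z.2)) (Set.Icc α β ×ˢ Set.Icc (-M) M) := by
    refine hq.comp_contDiffOn (ContDiffOn.mul ?_ contDiff_snd.contDiffOn)
    exact contDiff_fst.contDiffOn.rpow_const_of_ne fun z hz => (hα.trans_le hz.1.1).ne'
  obtain ⟨K, hK⟩ := hQ.exists_lipschitzOnWith (by simp)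
    ((convex_Icc α β).prod (convex_Icc (-M) M)) (isCompact_Icc.prod isCompact_Icc)
  have h1 : LipschitzWith (max 1 L) fun r : ℝ => (r, f r) := LipschitzWith.id.prodMk hf
  have h2 : LipschitzOnWith (K * max 1 L) (fun r => q (r ^ κ * f r)) (Set.uIcc α β) := by
    rw [Set.uIcc_of_le hαβ]
    exact hK.comp (h1.lipschitzOnWith (s := Set.Icc α β))
      (fun r hr => ⟨hr, abs_le.1 (hM r hr)⟩)
  exact h2.absolutelyContinuousOnInterval

/-- With `y` and `D` the values of `f` and its derivative at `r`, and `w = r ^ κ f`, the right-hand side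
minus the left-hand side is `(r w' - σ κ w √(1 - (w / W) ^ (p - 2))) ^ 2 / r`. -/
theorem calib_pointwise {p κ W σ r y D : ℝ} (hp : 2 < p) (hW : 0 < W) (hσ : σ ^ 2 = 1)
    (hr : 0 < r) (hy : 0 ≤ y) (hyW : r ^ κ * y ≤ W) :
    κ ^ 2 * W ^ (2 - p) * (y ^ p * r ^ (κ * p - 1)) +
      (σ * (2 * κ * W * blissFun p (r ^ κ * y / W)) - 2 * κ * (r ^ κ * y)) *
        (κ * r ^ (κ - 1) * y + r ^ κ * D) ≤ D ^ 2 * r ^ (2 * κ + 1) := by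
  set z := r ^ κ * y with hz
  have hrκ : 0 < r ^ κ := by positivity
  have hz0 : 0 ≤ z := by positivity
  set q := √(1 - |z / W| ^ (p - 2)) with hq
  have e1 : r ^ (κ - 1) = r ^ κ / r := by rw [Real.rpow_sub hr, Real.rpow_one]
  have e2 : r ^ (2 * κ + 1) = (r ^ κ) ^ 2 * r := by
    rw [Real.rpow_add hr, Real.rpow_one, two_mul, Real.rpow_add hr, sq]
  have e3 : y ^ p * r ^ (κ * p - 1) = z ^ p / r := by
    rw [Real.rpow_sub hr, Real.rpow_one, hz, Real.mul_rpow hrκ.le hy, ← Real.rpow_mul hr.le]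
    ring
  have hle : |z / W| ^ (p - 2) ≤ 1 := by
    refine Real.rpow_le_one (abs_nonneg _) ?_ (by linarith)
    rw [abs_of_nonneg (by positivity), div_le_one hW]; exact hyW
  have hq2 : q ^ 2 = 1 - |z / W| ^ (p - 2) := Real.sq_sqrt (by linarith)
  have e4 : W ^ (2 - p) * z ^ p = z ^ 2 * |z / W| ^ (p - 2) := by
    rcases hz0.eq_or_lt with h0 | h0
    · rw [← h0, Real.zero_rpow (by linarith)]; ring
    · rw [abs_of_nonneg (by positivity), Real.div_rpow h0.le hW.le, Real.rpow_sub h0,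
        Real.rpow_sub hW, Real.rpow_sub hW]
      norm_cast
      field_simp
  have e5 : blissFun p (z / W) = z / W * q := rfl
  have e6 : 2 * κ * W * (z / W * q) = 2 * κ * z * q := by field_simp
  rw [e3, e5, e6, e1, e2, mul_assoc (κ ^ 2), mul_div_assoc', e4]
  have hP : |z / W| ^ (p - 2) = 1 - q ^ 2 := by linarith
  rw [hP]
  have key : D ^ 2 * ((r ^ κ) ^ 2 * r) - (κ ^ 2 * (z ^ 2 * (1 - q ^ 2) / r) +
      (σ * (2 * κ * z * q) - 2 * κ * z) * (κ * (r ^ κ / r) * y + r ^ κ * D)) =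
      (r * (κ * (r ^ κ / r) * y + r ^ κ * D) - σ * κ * z * q) ^ 2 / r := by
    have : κ * (r ^ κ / r) * y = κ * z / r := by rw [hz]; ring
    rw [this]
    field_simp
    linear_combination (-κ ^ 2 * z ^ 2 * q ^ 2) * hσ
  have : 0 ≤ (r * (κ * (r ^ κ / r) * y + r ^ κ * D) - σ * κ * z * q) ^ 2 / r := by positivity
  linarith

/-- The integrated form of `calib_pointwise`; its second term is the derivative of
`calibPot p κ W σ (r ^ κ * f r)`. -/
theorem calib_interval {f : ℝ → ℝ} {L : NNReal} (hf : LipschitzWith L f) (hf0 : ∀ r, 0 ≤ f r)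
    {p κ W σ α β : ℝ} (hp : 2 < p) (hW : 0 < W) (hσ : σ ^ 2 = 1) (hα : 0 < α) (hαβ : α ≤ β)
    (hκ : 0 < κ) (hκp : 1 ≤ κ * p) (hle : ∀ r ∈ Set.Icc α β, r ^ κ * f r ≤ W) :
    κ ^ 2 * W ^ (2 - p) * (∫ r in α..β, f r ^ p * r ^ (κ * p - 1)) +
        (calibPot p κ W σ (β ^ κ * f β) - calibPot p κ W σ (α ^ κ * f α)) ≤
      ∫ r in α..β, deriv f r ^ 2 * r ^ (2 * κ + 1) := by
  have hac := ac_comp hf (contDiff_calibPot (κ := κ) (W := W) (σ := σ) hp) κ hα hαβ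
  have hI : Continuous fun r : ℝ => f r ^ p * r ^ (κ * p - 1) :=
    (hf.continuous.rpow_const fun r => Or.inr (by linarith)).mul
      (continuous_id.rpow_const fun r => Or.inr (by linarith))
  have hII := (hI.intervalIntegrable (μ := volume) α β).const_mul (κ ^ 2 * W ^ (2 - p))
  have hE : IntervalIntegrable (fun r => deriv f r ^ 2 * r ^ (2 * κ + 1)) volume α β := by
    have hc : Continuous fun r : ℝ => r ^ (2 * κ + 1) :=
      continuous_id.rpow_const fun r => Or.inr (by linarith)
    have hb : ∀ r, ‖deriv f r ^ 2‖ ≤ (L : ℝ) ^ 2 := fun r => by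
      rw [norm_pow]; gcongr; exact norm_deriv_le_of_lipschitz hf
    rw [intervalIntegrable_iff]
    exact (hc.intervalIntegrable α β).def'.bdd_mul
      ((measurable_deriv f).pow_const 2).aestronglyMeasurable (Eventually.of_forall hb)
  rw [← hac.integral_deriv_eq_sub, ← intervalIntegral.integral_const_mul,
    ← intervalIntegral.integral_add hII hac.intervalIntegrable_deriv]
  refine intervalIntegral.integral_mono_ae_restrict hαβ
    (hII.add hac.intervalIntegrable_deriv) hE ?_
  filter_upwards [ae_restrict_of_ae hf.ae_differentiableAt, ae_restrict_mem measurableSet_Icc]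
    with r hd hr
  have hr0 : 0 < r := hα.trans_le hr.1
  have hw : HasDerivAt (fun r => r ^ κ * f r) (κ * r ^ (κ - 1) * f r + r ^ κ * deriv f r) r :=
    (Real.hasDerivAt_rpow_const (Or.inl hr0.ne')).mul hd.hasDerivAt
  have hF := (hasDerivAt_calibPot (κ := κ) (W := W) (σ := σ) hp (r ^ κ * f r)).comp r hw
  have hF' : deriv (fun r => calibPot p κ W σ (r ^ κ * f r)) r = _ := hF.deriv
  rw [hF']
  exact calib_pointwise hp hW hσ hr0 (hf0 r) (hle r hr)

/-- Bliss's inequality before optimizing over the free parameter `W`, which here is the maximum of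
`r ^ κ f r`. -/
theorem bliss_aux {f : ℝ → ℝ} {L : NNReal} (hf : LipschitzWith L f) (hf0 : ∀ r, 0 ≤ f r)
    {p κ ρ : ℝ} (hp : 2 < p) (hκ : 0 < κ) (hκp : 1 ≤ κ * p) (hfρ : f ρ = 0) {r₁ : ℝ}
    (hr₁ : r₁ ∈ Set.Ioo 0 ρ) (hfr₁ : 0 < f r₁) :
    ∃ W : ℝ, 0 < W ∧
      κ ^ 2 * W ^ (2 - p) * (∫ r in (0 : ℝ)..ρ, f r ^ p * r ^ (κ * p - 1)) +
        4 * κ * blissPrim p 1 * W ^ 2 ≤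
      ∫ r in (0 : ℝ)..ρ, deriv f r ^ 2 * r ^ (2 * κ + 1) := by
  have hpow : Continuous fun r : ℝ => r ^ κ := continuous_id.rpow_const fun r => Or.inr hκ.le
  have hwc : Continuous fun r : ℝ => r ^ κ * f r := hpow.mul hf.continuous
  obtain ⟨r₀, hr₀, hmax⟩ := isCompact_Icc.exists_isMaxOn (s := Set.Icc 0 ρ)
    ⟨r₁, hr₁.1.le, hr₁.2.le⟩ hwc.continuousOn
  set W := r₀ ^ κ * f r₀ with hWdef
  have hle : ∀ r ∈ Set.Icc 0 ρ, r ^ κ * f r ≤ W := fun r hr => hmax hr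
  have hW : 0 < W := by
    refine lt_of_lt_of_le ?_ (hle r₁ ⟨hr₁.1.le, hr₁.2.le⟩)
    have := hr₁.1
    positivity
  have hr₀0 : 0 < r₀ := by
    refine lt_of_le_of_ne hr₀.1 fun h => ?_
    rw [hWdef, ← h, Real.zero_rpow hκ.ne'] at hW
    simp at hW
  refine ⟨W, hW, ?_⟩
  have hI : Continuous fun r : ℝ => f r ^ p * r ^ (κ * p - 1) :=
    (hf.continuous.rpow_const fun r => Or.inr (by linarith)).mul
      (continuous_id.rpow_const fun r => Or.inr (by linarith))
  have hE : ∀ a b, IntervalIntegrable (fun r => deriv f r ^ 2 * r ^ (2 * κ + 1)) volume a b := by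
    intro a b
    have hc : Continuous fun r : ℝ => r ^ (2 * κ + 1) :=
      continuous_id.rpow_const fun r => Or.inr (by linarith)
    have hb : ∀ r, ‖deriv f r ^ 2‖ ≤ (L : ℝ) ^ 2 := fun r => by
      rw [norm_pow]; gcongr; exact norm_deriv_le_of_lipschitz hf
    rw [intervalIntegrable_iff]
    exact (hc.intervalIntegrable a b).def'.bdd_mul
      ((measurable_deriv f).pow_const 2).aestronglyMeasurable (Eventually.of_forall hb)
  have hii : ∀ a b, IntervalIntegrable (fun r => f r ^ p * r ^ (κ * p - 1)) volume a b :=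
    fun a b => hI.intervalIntegrable a b
  have hval : ∀ σ, calibPot p κ W σ W = σ * (2 * κ * W ^ 2 * blissPrim p 1) - κ * W ^ 2 := by
    intro σ; rw [calibPot, div_self (ne_of_gt hW)]
  -- Calibrate with `σ = 1` on `[ε, r₀]` and with `σ = -1` on `[r₀, ρ]`: at `r₀` the two boundary
  -- terms `2 H(W)` add up. The boundary term at `ε` disappears as `ε → 0`.
  have hstep : ∀ ε ∈ Set.Ioc 0 r₀,
      κ ^ 2 * W ^ (2 - p) * (∫ r in ε..ρ, f r ^ p * r ^ (κ * p - 1)) +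
        4 * κ * blissPrim p 1 * W ^ 2 + (κ * W ^ 2 - κ * W ^ 2) -
          calibPot p κ W 1 (ε ^ κ * f ε) ≤
      ∫ r in (0 : ℝ)..ρ, deriv f r ^ 2 * r ^ (2 * κ + 1) := by
    intro ε hε
    have h1 := calib_interval hf hf0 (σ := 1) hp hW (by norm_num) hε.1 hε.2 hκ hκp
      (fun r hr => hle r ⟨hε.1.le.trans hr.1, hr.2.trans hr₀.2⟩)
    have h2 := calib_interval hf hf0 (σ := -1) hp hW (by norm_num) hr₀0 hr₀.2 hκ hκp
      (fun r hr => hle r ⟨hr₀0.le.trans hr.1, hr.2⟩)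
    rw [← hWdef, hval] at h1 h2
    have hz : calibPot p κ W (-1) (ρ ^ κ * f ρ) = 0 := by
      rw [hfρ]; simp [calibPot, blissPrim]
    rw [hz] at h2
    have h3 : 0 ≤ ∫ r in (0 : ℝ)..ε, deriv f r ^ 2 * r ^ (2 * κ + 1) :=
      intervalIntegral.integral_nonneg hε.1.le fun r hr => by
        have := hr.1
        positivity
    have s1 := intervalIntegral.integral_add_adjacent_intervals (hE 0 ε) (hE ε r₀)
    have s2 := intervalIntegral.integral_add_adjacent_intervals (hE 0 r₀) (hE r₀ ρ)
    have s3 := intervalIntegral.integral_add_adjacent_intervals (hii ε r₀) (hii r₀ ρ)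
    rw [← s3, mul_add]
    linarith
  have hcont : Continuous fun ε : ℝ =>
      κ ^ 2 * W ^ (2 - p) * (∫ r in ε..ρ, f r ^ p * r ^ (κ * p - 1)) +
        4 * κ * blissPrim p 1 * W ^ 2 + (κ * W ^ 2 - κ * W ^ 2) -
          calibPot p κ W 1 (ε ^ κ * f ε) := by
    have c1 : Continuous fun ε : ℝ => ∫ r in ε..ρ, f r ^ p * r ^ (κ * p - 1) := by
      simp_rw [intervalIntegral.integral_symm ρ]
      exact (intervalIntegral.continuous_primitive hii ρ).neg
    have c2 : Continuous fun ε : ℝ => calibPot p κ W 1 (ε ^ κ * f ε) :=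
      (contDiff_calibPot (W := W) hp).continuous.comp hwc
    fun_prop
  have hT := (hcont.tendsto 0).mono_left (nhdsWithin_le_nhds (s := Set.Ioi 0))
  have hfin := le_of_tendsto hT (by
    filter_upwards [Ioc_mem_nhdsGT hr₀0] with ε hε using hstep ε hε)
  have hz : calibPot p κ W 1 ((0 : ℝ) ^ κ * f 0) = 0 := by
    rw [Real.zero_rpow hκ.ne']; simp [calibPot, blissPrim]
  rw [hz] at hfin
  linarith

theorem blissPrim_one_pos {p : ℝ} (hp : 2 < p) : 0 < blissPrim p 1 := by
  refine intervalIntegral.intervalIntegral_pos_of_pos_on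
    ((continuous_blissFun hp).intervalIntegrable _ _) (fun x hx => ?_) one_pos
  have h1 : |x| ^ (p - 2) < 1 :=
    Real.rpow_lt_one (abs_nonneg x) (by rw [abs_of_pos hx.1]; exact hx.2) (by linarith)
  exact mul_pos hx.1 (Real.sqrt_pos.2 (by linarith))

/-- Bliss's inequality for nonnegative Lipschitz functions vanishing at `ρ`. -/
theorem bliss {f : ℝ → ℝ} {L : NNReal} (hf : LipschitzWith L f) (hf0 : ∀ r, 0 ≤ f r)
    {p κ ρ : ℝ} (hp : 2 < p) (hκ : 0 < κ) (hκp : 1 ≤ κ * p) (hρ : 0 < ρ) (hfρ : f ρ = 0) :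
    (κ ^ 2 * p / 2) ^ (2 / p) * (4 * κ * blissPrim p 1 * p / (p - 2)) ^ ((p - 2) / p) *
        (∫ r in (0 : ℝ)..ρ, f r ^ p * r ^ (κ * p - 1)) ^ (2 / p) ≤
      ∫ r in (0 : ℝ)..ρ, deriv f r ^ 2 * r ^ (2 * κ + 1) := by
  have hp0 : 0 < p := by linarith
  have hp2 : 0 < p - 2 := by linarith
  have hE0 : 0 ≤ ∫ r in (0 : ℝ)..ρ, deriv f r ^ 2 * r ^ (2 * κ + 1) :=
    intervalIntegral.integral_nonneg hρ.le fun r hr => by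
      have := hr.1
      positivity
  by_cases hz : ∃ r₁ ∈ Set.Ioo 0 ρ, 0 < f r₁
  · obtain ⟨r₁, hr₁, hfr₁⟩ := hz
    obtain ⟨W, hW, hmain⟩ := bliss_aux hf hf0 hp hκ hκp hfρ hr₁ hfr₁
    set I := ∫ r in (0 : ℝ)..ρ, f r ^ p * r ^ (κ * p - 1) with hI
    have hI0 : 0 ≤ I := intervalIntegral.integral_nonneg hρ.le fun r hr => by
      have := hr.1
      have := hf0 r
      positivity
    set b := blissPrim p 1 with hb
    have hb0 : 0 < b := blissPrim_one_pos hp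
    refine le_trans ?_ hmain
    -- The weights `2 / p` and `(p - 2) / p` are those for which the powers of `W` cancel.
    have hAG := Real.geom_mean_le_arith_mean2_weighted (w₁ := 2 / p) (w₂ := (p - 2) / p)
      (p₁ := κ ^ 2 * p / 2 * I * W ^ (2 - p)) (p₂ := 4 * κ * b * p / (p - 2) * W ^ (2 : ℝ))
      (by positivity) (by positivity) (by positivity) (by positivity) (by field_simp; ring)
    have hW1 : (W ^ (2 - p)) ^ (2 / p) * (W ^ (2 : ℝ)) ^ ((p - 2) / p) = 1 := by
      rw [← Real.rpow_mul hW.le, ← Real.rpow_mul hW.le, ← Real.rpow_add hW]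
      have : (2 - p) * (2 / p) + 2 * ((p - 2) / p) = 0 := by ring
      rw [this, Real.rpow_zero]
    have e1 : (κ ^ 2 * p / 2 * I * W ^ (2 - p)) ^ (2 / p) *
        (4 * κ * b * p / (p - 2) * W ^ (2 : ℝ)) ^ ((p - 2) / p) =
        (κ ^ 2 * p / 2) ^ (2 / p) * (4 * κ * b * p / (p - 2)) ^ ((p - 2) / p) * I ^ (2 / p) := by
      rw [Real.mul_rpow (by positivity) (by positivity), Real.mul_rpow (by positivity) hI0,
        Real.mul_rpow (by positivity) (by positivity)]
      linear_combination ((κ ^ 2 * p / 2) ^ (2 / p) * (4 * κ * b * p / (p - 2)) ^ ((p - 2) / p) *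
        I ^ (2 / p)) * hW1
    rw [e1] at hAG
    refine hAG.trans (le_of_eq ?_)
    norm_cast
    field_simp
  · push Not at hz
    have hI : ∫ r in (0 : ℝ)..ρ, f r ^ p * r ^ (κ * p - 1) = 0 := by
      rw [intervalIntegral.integral_of_le hρ.le, ← integral_Ioc_eq_integral_Ioo.symm]
      refine setIntegral_eq_zero_of_forall_eq_zero fun r hr => ?_
      have : f r = 0 := le_antisymm (hz r hr) (hf0 r)
      simp [this, Real.zero_rpow hp0.ne']
    rw [hI, Real.zero_rpow (by positivity), mul_zero]
    exact hE0

end Bliss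

/-! ### The sharp constant -/

/-- The Beta integral `B(ν, 3/2)`; the integrand vanishes beyond `1`, where `Real.sqrt` is evaluated
at a negative number. -/
theorem integral_beta_sqrt {ν : ℝ} (hν : 0 < ν) :
    ∫ y in Set.Ioi (0 : ℝ), y ^ (ν - 1) * √(1 - y) =
      Real.Gamma ν * Real.Gamma (3 / 2) / Real.Gamma (ν + 3 / 2) := by
  have hB := ProbabilityTheory.beta_eq_betaIntegralReal ν (3 / 2) hν (by norm_num)
  rw [ProbabilityTheory.beta] at hB
  rw [hB, Complex.betaIntegral, intervalIntegral.integral_of_le zero_le_one,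
    ← RCLike.re_to_complex, ← integral_re]
  · rw [setIntegral_eq_of_subset_of_forall_sdiff_eq_zero (s := Set.Ioc (0 : ℝ) 1)
      measurableSet_Ioi Set.Ioc_subset_Ioi_self]
    · refine setIntegral_congr_fun measurableSet_Ioc fun x hx => ?_
      have h1 : (0 : ℝ) ≤ 1 - x := by linarith [hx.2]
      have e : ((x : ℂ) ^ ((ν : ℂ) - 1) * (1 - (x : ℂ)) ^ (((3 / 2 : ℝ) : ℂ) - 1)) =
          ((x ^ (ν - 1) * √(1 - x) : ℝ) : ℂ) := by
        rw [Complex.ofReal_mul, Complex.ofReal_cpow hx.1.le, Real.sqrt_eq_rpow,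
          Complex.ofReal_cpow h1]
        push_cast
        norm_num
      simp only [e, RCLike.re_to_complex, Complex.ofReal_re]
    · intro x hx
      have : 1 < x := by
        by_contra h
        exact hx.2 ⟨hx.1, not_lt.1 h⟩
      rw [Real.sqrt_eq_zero_of_nonpos (by linarith), mul_zero]
  · have := Complex.betaIntegral_convergent (u := (ν : ℂ)) (v := ((3 / 2 : ℝ) : ℂ))
      (by simpa) (by rw [Complex.ofReal_re]; norm_num)
    rwa [intervalIntegrable_iff_integrableOn_Ioc_of_le zero_le_one, IntegrableOn] at this

/-- The substitution `y = x ^ (p - 2)` turns `∫ x √(1 - x ^ (p - 2))` into a Beta integral, and the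
duplication formula removes the half-integer arguments. -/
theorem blissPrim_one {p ν : ℝ} (hp : 2 < p) (hν : ν = 2 / (p - 2)) :
    blissPrim p 1 =
      2 ^ (2 * ν - 1) * Real.Gamma (ν + 1) ^ 2 / Real.Gamma (2 * ν + 2) := by
  have hq : 0 < p - 2 := by linarith
  have hν0 : 0 < ν := by rw [hν]; positivity
  have hqν : (p - 2) * ν = 2 := by rw [hν]; field_simp
  have h1 : blissPrim p 1 = ∫ x in Set.Ioi (0 : ℝ), blissFun p x := by
    rw [blissPrim, intervalIntegral.integral_of_le zero_le_one]
    refine (setIntegral_eq_of_subset_of_forall_sdiff_eq_zero measurableSet_Ioi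
      Set.Ioc_subset_Ioi_self ?_).symm
    intro x hx
    have hx1 : 1 < x := by
      by_contra h
      exact hx.2 ⟨hx.1, not_lt.1 h⟩
    have h2 : 1 ≤ |x| ^ (p - 2) := Real.one_le_rpow (hx1.le.trans (le_abs_self x)) hq.le
    rw [blissFun, Real.sqrt_eq_zero_of_nonpos (by linarith), mul_zero]
  have h2 := integral_comp_rpow_Ioi (fun y : ℝ => y ^ (ν - 1) * √(1 - y)) hq.ne'
  have h3 : ∫ x in Set.Ioi (0 : ℝ), (|p - 2| * x ^ (p - 2 - 1)) •
      ((x ^ (p - 2)) ^ (ν - 1) * √(1 - x ^ (p - 2))) = (p - 2) * blissPrim p 1 := by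
    rw [h1, ← integral_const_mul]
    refine setIntegral_congr_fun measurableSet_Ioi fun x hx => ?_
    have hx0 : (0 : ℝ) < x := hx
    have e : x ^ (p - 2 - 1) * (x ^ (p - 2)) ^ (ν - 1) = x := by
      rw [← Real.rpow_mul hx0.le, ← Real.rpow_add hx0]
      have : p - 2 - 1 + (p - 2) * (ν - 1) = 1 := by linarith
      rw [this, Real.rpow_one]
    simp only [smul_eq_mul, blissFun, abs_of_pos hq, abs_of_pos hx0]
    rw [show (p - 2) * x ^ (p - 2 - 1) * ((x ^ (p - 2)) ^ (ν - 1) * √(1 - x ^ (p - 2))) =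
      (p - 2) * (x ^ (p - 2 - 1) * (x ^ (p - 2)) ^ (ν - 1) * √(1 - x ^ (p - 2))) by ring, e]
  rw [h3, integral_beta_sqrt hν0] at h2
  have hb : blissPrim p 1 = ν / 2 * ((p - 2) * blissPrim p 1) := by
    linear_combination (-(blissPrim p 1) / 2) * hqν
  have hdup := Real.Gamma_mul_Gamma_add_half (ν + 1)
  have hG32 : Real.Gamma (3 / 2) = √Real.pi / 2 := by
    have := Real.Gamma_add_one (s := 1 / 2) (by norm_num)
    rw [Real.Gamma_one_half_eq] at this
    rw [show (3 / 2 : ℝ) = 1 / 2 + 1 by norm_num, this]; ring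
  have hG1 := Real.Gamma_add_one hν0.ne'
  have hpi : 0 < √Real.pi := Real.sqrt_pos.2 Real.pi_pos
  have hGa : 0 < Real.Gamma (ν + 3 / 2) := Real.Gamma_pos_of_pos (by linarith)
  have hGb : 0 < Real.Gamma (2 * ν + 2) := Real.Gamma_pos_of_pos (by linarith)
  rw [show ν + 1 + 1 / 2 = ν + 3 / 2 by ring, show 2 * (ν + 1) = 2 * ν + 2 by ring,
    show 1 - (2 * ν + 2) = -(2 * ν - 1) - 2 by ring, Real.rpow_sub two_pos,
    Real.rpow_neg two_pos.le] at hdup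
  have h2pos : (0 : ℝ) < 2 ^ (2 * ν - 1) := by positivity
  rw [hb, h2, hG32]
  have hν' : ν * Real.Gamma ν = Real.Gamma (ν + 1) := hG1.symm
  generalize Real.Gamma (ν + 3 / 2) = A at *
  generalize Real.Gamma (2 * ν + 2) = B at *
  generalize Real.Gamma (ν + 1) = C at *
  generalize (2 : ℝ) ^ (2 * ν - 1) = D at *
  generalize √Real.pi = π' at *
  generalize Real.Gamma ν = G at *
  rw [show ν / 2 * (G * (π' / 2) / A) = C * π' / (4 * A) by rw [← hν']; field_simp; ring,
    div_eq_div_iff (by positivity) hGb.ne']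
  have h4 : C * A * D * 4 = B * π' := by
    rw [hdup]; norm_num; field_simp
  linear_combination (-C) * h4

/-- The constant `K_a` is exactly the one that Bliss's inequality with `κ = (n - 2) / 2` yields,
the remaining factor being the area `n ω` of the unit sphere. -/
theorem CKNconst_sq {n : ℕ} (hn : 3 ≤ n) {a p : ℝ} (hp2 : 2 < p) (hs2 : a * p < 2)
    (hκ : ((n : ℝ) - 2) / 2 * p = n - a * p) (hω : 0 < omegaBall n) :
    CKNconst n a p ^ 2 * (((((n : ℝ) - 2) / 2) ^ 2 * p / 2) ^ (2 / p) *
      (4 * (((n : ℝ) - 2) / 2) * blissPrim p 1 * p / (p - 2)) ^ ((p - 2) / p)) *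
      (n * omegaBall n) ^ ((p - 2) / p) = 1 := by
  have hn' : (3 : ℝ) ≤ n := by exact_mod_cast hn
  set s := a * p with hs
  set N : ℝ := (n : ℝ) with hN
  have hp0 : 0 < p := by linarith
  have hns : 0 < N - s := by linarith
  have h2s : 0 < 2 - s := by linarith
  have hN2 : 0 < N - 2 := by linarith
  have hp2' : 0 < p - 2 := by linarith
  have hpe : p = 2 * (N - s) / (N - 2) := by rw [← hκ]; field_simp
  have hpm : p - 2 = 2 * (2 - s) / (N - 2) := by rw [hpe]; field_simp; ring
  obtain ⟨ν, hν⟩ : ∃ ν, ν = 2 / (p - 2) := ⟨_, rfl⟩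
  have hν' : ν = (N - 2) / (2 - s) := by rw [hν, hpm]; field_simp
  have hν0 : 0 < ν := by rw [hν]; positivity
  obtain ⟨t, ht⟩ : ∃ t, t = (p - 2) / p := ⟨_, rfl⟩
  have ht' : t = (2 - s) / (N - s) := by rw [ht, hpm, hpe]; field_simp
  have ht0 : 0 < t := by rw [ht]; positivity
  have h2p : 2 / p = 1 - t := by rw [ht]; field_simp; ring
  have hνt : (2 * ν + 2) * t = 2 := by rw [hν', ht']; field_simp; ring
  have hG1 : 0 < Real.Gamma (ν + 1) := Real.Gamma_pos_of_pos (by linarith)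
  have hG2 : 0 < Real.Gamma (2 * ν + 2) := Real.Gamma_pos_of_pos (by linarith)
  have hb := blissPrim_one hp2 hν
  obtain ⟨A, hA⟩ : ∃ A, A = (N - 2) * (N - s) := ⟨_, rfl⟩
  have hA0 : 0 < A := by rw [hA]; positivity
  have e1 : ((N - 2) / 2) ^ 2 * p / 2 = A / 4 := by rw [hpe, hA]; field_simp; norm_num
  have e2 : 4 * ((N - 2) / 2) * blissPrim p 1 * p / (p - 2) =
      A / 4 * (2 ^ (2 * ν + 2) * (Real.Gamma (ν + 1) ^ 2 / ((2 - s) * Real.Gamma (2 * ν + 2)))) := by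
    rw [hb, show 2 * ν + 2 = (2 * ν - 1) + 3 by ring, Real.rpow_add two_pos, hpm, hpe, hA]
    norm_num
    field_simp
    norm_num
  have hK : CKNconst n a p ^ 2 = 1 / A *
      ((2 - s) * Real.Gamma (2 * ν + 2) / (N * omegaBall n * Real.Gamma (ν + 1) ^ 2)) ^ t := by
    have g1 : (2 * N - 2 * a * p) / (2 - s) = 2 * ν + 2 := by
      rw [hν', show 2 * N - 2 * a * p = 2 * (N - s) by rw [hs]; ring]; field_simp; ring
    have g2 : (N - s) / (2 - s) = ν + 1 := by rw [hν']; field_simp; ring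
    have g3 : (2 - s) / (2 * N - 2 * a * p) = t / 2 := by
      rw [ht', show 2 * N - 2 * a * p = 2 * (N - s) by rw [hs]; ring]; field_simp
    rw [CKNconst, ← hs, ← hN, g1, g2, g3, ← hA, mul_pow, ← Real.rpow_natCast, ← Real.rpow_mul,
      ← Real.rpow_natCast, ← Real.rpow_mul]
    · norm_num
    all_goals positivity
  rw [hK, ← ht, h2p, e1, e2, Real.mul_rpow (by positivity) (by positivity),
    ← mul_assoc ((A / 4) ^ (1 - t)), ← Real.rpow_add (by positivity), sub_add_cancel,
    Real.rpow_one, Real.mul_rpow (by positivity) (by positivity), ← Real.rpow_mul two_pos.le, hνt]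
  have e3 : ((2 - s) * Real.Gamma (2 * ν + 2) / (N * omegaBall n * Real.Gamma (ν + 1) ^ 2)) ^ t *
      (Real.Gamma (ν + 1) ^ 2 / ((2 - s) * Real.Gamma (2 * ν + 2))) ^ t *
      (N * omegaBall n) ^ t = 1 := by
    rw [← Real.mul_rpow (by positivity) (by positivity),
      ← Real.mul_rpow (by positivity) (by positivity)]
    rw [show (2 - s) * Real.Gamma (2 * ν + 2) / (N * omegaBall n * Real.Gamma (ν + 1) ^ 2) *
      (Real.Gamma (ν + 1) ^ 2 / ((2 - s) * Real.Gamma (2 * ν + 2))) *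
      (N * omegaBall n) = 1 by field_simp, Real.one_rpow]
  generalize ((2 - s) * Real.Gamma (2 * ν + 2) / (N * omegaBall n * Real.Gamma (ν + 1) ^ 2)) ^ t = X
    at *
  generalize (Real.Gamma (ν + 1) ^ 2 / ((2 - s) * Real.Gamma (2 * ν + 2))) ^ t = Y at *
  generalize (N * omegaBall n) ^ t = Z at *
  have h4 : (2 : ℝ) ^ (2 : ℝ) = 4 := by norm_num
  rw [h4]
  field_simp
  exact e3

/-! ### Radial integrals -/

theorem omegaBall_pos (n : ℕ) : 0 < omegaBall n :=
  div_pos (Real.rpow_pos_of_pos Real.pi_pos _) (Real.Gamma_pos_of_pos (by positivity))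

/-- A radial integral of a nonnegative function vanishing for `r ≥ ρ`, as an interval integral. -/
theorem lintegral_radial_eq_ofReal (n : ℕ) {c ρ : ℝ} (hc : 0 ≤ c) (hρ : 0 ≤ ρ) {φ ψ : ℝ → ℝ}
    (hφm : Measurable φ) (hφ : ∀ r, ρ ≤ r → φ r = 0)
    (hψ : ∀ r, 0 ≤ ψ r) (hψi : IntervalIntegrable ψ volume 0 ρ)
    (h : ∀ r, 0 < r → φ r * r ^ (n - 1) = ψ r) :
    ∫⁻ r, ENNReal.ofReal (φ r) ∂radialMeasure n c =
      ENNReal.ofReal (n * c * ∫ r in (0 : ℝ)..ρ, ψ r) := by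
  rw [lintegral_radial n c hφm.ennreal_ofReal]
  have e : ∀ r ∈ Set.Ioi (0 : ℝ), ENNReal.ofReal (φ r) * ENNReal.ofReal (n * c * r ^ (n - 1)) =
      ENNReal.ofReal (n * c) *
        (Set.Ioc 0 ρ).indicator (fun r => ENNReal.ofReal (ψ r)) r := by
    intro r hr
    have hr0 : (0 : ℝ) < r := hr
    by_cases hrρ : r ≤ ρ
    · rw [Set.indicator_of_mem (show r ∈ Set.Ioc 0 ρ from ⟨hr0, hrρ⟩),
        ← ENNReal.ofReal_mul' (by positivity), ← ENNReal.ofReal_mul (by positivity), ← h r hr0]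
      ring_nf
    · rw [Set.indicator_of_notMem (fun hh => hrρ hh.2), hφ r (not_le.1 hrρ).le]
      simp
  rw [setLIntegral_congr_fun measurableSet_Ioi e, lintegral_const_mul' _ _ ENNReal.ofReal_ne_top,
    ENNReal.ofReal_mul (p := n * c) (by positivity), setLIntegral_indicator measurableSet_Ioc,
    Set.inter_eq_left.2 Set.Ioc_subset_Ioi_self, intervalIntegral.integral_of_le hρ,
    ofReal_integral_eq_lintegral_ofReal]
  · exact (intervalIntegrable_iff_integrableOn_Ioc_of_le hρ).1 hψi
  · exact Eventually.of_forall hψ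

end CKNProof

/-- the sharp Caffarelli-Kohn-Nirenberg inequality holds on any
`n`-dimensional Minkowski space `(E, ‖·‖)` with the Lebesgue (Haar) measure normalized so
that the unit ball has measure `ω_n`. -/
theorem ckn_minkowski {E : Type*} [NormedAddCommGroup E] [NormedSpace ℝ E]
    [MeasurableSpace E] [BorelSpace E] [FiniteDimensional ℝ E]
    (n : ℕ) (hn : 3 ≤ n) (hdim : Module.finrank ℝ E = n)
    (a p : ℝ) (ha0 : 0 ≤ a) (ha1 : a < 1) (hp : p = 2 * n / (n - 2 + 2 * a))
    (μ : Measure E) [μ.IsAddHaarMeasure]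
    (hμ : μ (ball (0 : E) 1) = ENNReal.ofReal (omegaBall n))
    (x₀ : E) (u : E → ℝ) (hu : ContDiff ℝ (⊤ : ℕ∞) u) (hsupp : HasCompactSupport u) :
    (∫⁻ x, ENNReal.ofReal (|u x| ^ p / ‖x - x₀‖ ^ (a * p)) ∂μ) ^ ((1 : ℝ) / p) ≤
      ENNReal.ofReal (CKNconst n a p) *
        (∫⁻ x, ENNReal.ofReal (‖fderiv ℝ u x‖ ^ 2) ∂μ) ^ ((1 : ℝ) / 2) := by
  have hn' : (3 : ℝ) ≤ n := by exact_mod_cast hn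
  have hn0 : n ≠ 0 := by lia
  have hden : (0 : ℝ) < n - 2 + 2 * a := by linarith
  have hp2 : 2 < p := by rw [hp, lt_div_iff₀ hden]; linarith
  have hp0 : 0 < p := by linarith
  have hpd : p * (n - 2 + 2 * a) = 2 * n := by rw [hp]; field_simp
  have hs0 : 0 ≤ a * p := by positivity
  have hs2 : a * p < 2 := by
    have : (p - 2) * (n - 2) = 2 * (2 - a * p) := by linear_combination hpd
    nlinarith [mul_pos (show 0 < p - 2 by linarith) (show (0 : ℝ) < n - 2 by linarith)]
  have hκ : ((n : ℝ) - 2) / 2 * p = n - a * p := by linear_combination hpd / 2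
  have hω := omegaBall_pos n
  have hball : μ.real (ball (0 : E) 1) = omegaBall n := by
    rw [measureReal_def, hμ, ENNReal.toReal_ofReal hω.le]
  obtain ⟨L, hR⟩ := levelRadius_profile hn0 hdim μ hu hsupp
  have hHL := hardy_littlewood hn0 hdim hu.continuous hsupp hR hs0 hp0 x₀
  have hPS := polya_szego (by lia : 2 ≤ n) hdim hu hsupp hR
  rw [hball] at hHL hPS
  set R := levelRadius n μ u
  set f := rearr R
  have hfL : LipschitzWith L f := hR.lipschitz
  have hf0 : ∀ r, 0 ≤ f r := fun r => rearr_nonneg R r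
  obtain ⟨ρ, hρ0, hρR⟩ : ∃ ρ : ℝ, 0 < ρ ∧ R 0 < ρ := ⟨max (R 0) 0 + 1, by positivity, by
    linarith [le_max_left (R 0) 0]⟩
  have hfz : ∀ r, ρ ≤ r → f r = 0 := fun r hr =>
    hR.rearr_eq_zero ((hρR.le.trans hr).trans (le_abs_self r))
  have hκ0 : 0 < ((n : ℝ) - 2) / 2 := by linarith
  have hκp : 1 ≤ ((n : ℝ) - 2) / 2 * p := by rw [hκ]; linarith
  have hbliss := bliss hfL hf0 hp2 hκ0 hκp hρ0 (hfz ρ le_rfl)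
  have hfd : ∀ r, ρ ≤ r → deriv f r = 0 := fun r hr =>
    IsRadiusProfile.deriv_eq_zero_of_rearr_eq_zero (hfz r hr)
  set κ := ((n : ℝ) - 2) / 2 with hκd
  have hcast : ((n - 1 : ℕ) : ℝ) = n - 1 := by rw [Nat.cast_sub (by lia)]; simp
  -- The powers of `|r|` instead of `r` make the integrands nonnegative on the whole line; on
  -- `(0, ρ)` the two agree. The exponents are those of Bliss's inequality since `κ p = n - a p`.
  rw [lintegral_radial_eq_ofReal n (ψ := fun r => f r ^ p * |r| ^ (κ * p - 1)) hω.le hρ0.le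
    ?_ ?_ ?_ ?_ ?_] at hHL
  rotate_left
  · have := hfL.continuous.measurable
    fun_prop
  · intro r hr
    rw [hfz r hr, Real.zero_rpow hp0.ne', zero_div]
  · intro r
    have := hf0 r
    positivity
  · refine Continuous.intervalIntegrable ?_ _ _
    exact (hfL.continuous.rpow_const fun _ => Or.inr hp0.le).mul
      (continuous_abs.rpow_const fun _ => Or.inr (by linarith))
  · intro r hr
    rw [abs_of_pos hr, ← Real.rpow_natCast r, hcast, div_mul_eq_mul_div, mul_div_assoc,
      ← Real.rpow_sub hr, hκ]
    ring_nf
  rw [lintegral_radial_eq_ofReal n (ψ := fun r => deriv f r ^ 2 * |r| ^ (2 * κ + 1)) hω.le hρ0.le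
    ?_ ?_ ?_ ?_ ?_] at hPS
  rotate_left
  · exact (measurable_deriv f).pow_const 2
  · intro r hr
    rw [hfd r hr]; simp
  · intro r
    positivity
  · have hc : Continuous fun r : ℝ => |r| ^ (2 * κ + 1) :=
      continuous_abs.rpow_const fun _ => Or.inr (by linarith)
    have hb : ∀ r, ‖deriv f r ^ 2‖ ≤ (L : ℝ) ^ 2 := fun r => by
      rw [norm_pow]; gcongr; exact norm_deriv_le_of_lipschitz hfL
    rw [intervalIntegrable_iff]
    exact (hc.intervalIntegrable 0 ρ).def'.bdd_mul
      ((measurable_deriv f).pow_const 2).aestronglyMeasurable (Eventually.of_forall hb)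
  · intro r hr
    rw [abs_of_pos hr, ← Real.rpow_natCast r, hcast, hκd]
    ring_nf
  have habs : ∀ (g : ℝ → ℝ) (q : ℝ),
      ∫ r in (0 : ℝ)..ρ, g r * |r| ^ q = ∫ r in (0 : ℝ)..ρ, g r * r ^ q := fun g q =>
    intervalIntegral.integral_congr fun r hr => by
      rw [Set.uIcc_of_le hρ0.le] at hr
      simp only [abs_of_nonneg hr.1]
  rw [habs (fun r => f r ^ p)] at hHL
  rw [habs (fun r => deriv f r ^ 2)] at hPS
  have hI0 : 0 ≤ ∫ r in (0 : ℝ)..ρ, f r ^ p * r ^ (κ * p - 1) :=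
    intervalIntegral.integral_nonneg hρ0.le fun r hr =>
      mul_nonneg (Real.rpow_nonneg (hf0 r) _) (Real.rpow_nonneg hr.1 _)
  have hE0 : 0 ≤ ∫ r in (0 : ℝ)..ρ, deriv f r ^ 2 * r ^ (2 * κ + 1) :=
    intervalIntegral.integral_nonneg hρ0.le fun r hr =>
      mul_nonneg (sq_nonneg _) (Real.rpow_nonneg hr.1 _)
  have hK := CKNconst_sq hn hp2 hs2 hκ hω
  rw [← hκd] at hK
  have hb1 := blissPrim_one_pos hp2
  generalize (∫ r in (0 : ℝ)..ρ, f r ^ p * r ^ (κ * p - 1)) = I at *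
  generalize (∫ r in (0 : ℝ)..ρ, deriv f r ^ 2 * r ^ (2 * κ + 1)) = D at *
  have hC0 : 0 < (κ ^ 2 * p / 2) ^ (2 / p) *
      (4 * κ * blissPrim p 1 * p / (p - 2)) ^ ((p - 2) / p) := by
    have : 0 < p - 2 := by linarith
    positivity
  generalize (κ ^ 2 * p / 2) ^ (2 / p) *
      (4 * κ * blissPrim p 1 * p / (p - 2)) ^ ((p - 2) / p) = C at *
  have hK0 : 0 ≤ CKNconst n a p := by
    have h1 : (0 : ℝ) < n - 2 := by linarith
    have h2 : 0 < n - a * p := by linarith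
    have h3 : 0 < 2 - a * p := by linarith
    have h4 : 0 < 2 * n - 2 * a * p := by linarith
    have h5 : 0 < Real.Gamma ((2 * (n : ℝ) - 2 * a * p) / (2 - a * p)) :=
      Real.Gamma_pos_of_pos (by positivity)
    rw [CKNconst]
    positivity
  have hnω : 0 < n * omegaBall n := by positivity
  have hreal : (n * omegaBall n * I) ^ (1 / p) ≤
      CKNconst n a p * (n * omegaBall n * D) ^ ((1 : ℝ) / 2) := by
    refine le_of_sq_le_sq ?_ (by positivity)
    have e1 : ((n * omegaBall n * I) ^ (1 / p)) ^ 2 = (n * omegaBall n) ^ (2 / p) * I ^ (2 / p) := by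
      rw [← Real.rpow_natCast, ← Real.rpow_mul (by positivity), Real.mul_rpow hnω.le hI0]
      norm_num
      ring_nf
    have e2 : (CKNconst n a p * (n * omegaBall n * D) ^ ((1 : ℝ) / 2)) ^ 2 =
        CKNconst n a p ^ 2 * ((n * omegaBall n) * D) := by
      rw [mul_pow, ← Real.sqrt_eq_rpow, Real.sq_sqrt (by positivity)]
    have e3 : (n * omegaBall n) ^ (2 / p) * (n * omegaBall n) ^ ((p - 2) / p) =
        n * omegaBall n := by
      rw [← Real.rpow_add hnω, show 2 / p + (p - 2) / p = 1 by field_simp; ring, Real.rpow_one]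
    rw [e1, e2]
    calc (n * omegaBall n) ^ (2 / p) * I ^ (2 / p)
        = CKNconst n a p ^ 2 * ((n * omegaBall n) ^ (2 / p) *
            (n * omegaBall n) ^ ((p - 2) / p)) * (C * I ^ (2 / p)) := by
          linear_combination (-(n * omegaBall n) ^ (2 / p) * I ^ (2 / p)) * hK
      _ ≤ CKNconst n a p ^ 2 * ((n * omegaBall n) ^ (2 / p) *
            (n * omegaBall n) ^ ((p - 2) / p)) * D := by gcongr
      _ = _ := by rw [e3]; ring
  calc _ ≤ ENNReal.ofReal (n * omegaBall n * I) ^ (1 / p) :=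
        ENNReal.rpow_le_rpow hHL (by positivity)
    _ = ENNReal.ofReal ((n * omegaBall n * I) ^ (1 / p)) :=
        ENNReal.ofReal_rpow_of_nonneg (by positivity) (by positivity)
    _ ≤ ENNReal.ofReal (CKNconst n a p * (n * omegaBall n * D) ^ ((1 : ℝ) / 2)) :=
        ENNReal.ofReal_le_ofReal hreal
    _ = ENNReal.ofReal (CKNconst n a p) *
          ENNReal.ofReal (n * omegaBall n * D) ^ ((1 : ℝ) / 2) := by
        rw [ENNReal.ofReal_mul hK0, ENNReal.ofReal_rpow_of_nonneg (by positivity) (by norm_num)]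
    _ ≤ _ := by gcongr
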